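/- Let Γ be a Shilla distance-regular graph with b(Γ) = 3 that is Q-polynomial with respect to θ₁. Then the intersection array of Γ is {42, 30, 12; 1, 6, 28} or {105, 72, 24; 1, 12, 70}. -/

import Mathlib

open Finset SimpleGraph

/-- `G` is a distance-regular graph with diameter `D` and intersection numbers
`b i`, `c i`, `a i` (so valency `k = b 0` and `a i = k - b i - c i`). -/
structure IsDRG {V : Type*} [Fintype V] (G : SimpleGraph V) (D : ℕ)
    (b c a : ℕ → ℕ) : Prop where
  connected : G.Connected
  le_diam : ∀ x y : V, G.dist x y ≤ D
  exists_diam : ∃ x y : V, G.dist x y = D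
  card_b : ∀ i, i ≤ D → ∀ x y : V, G.dist x y = i →
      Nat.card {z : V | G.Adj y z ∧ G.dist x z = i + 1} = b i
  card_c : ∀ i, i ≤ D → ∀ x y : V, G.dist x y = i →
      Nat.card {z : V | G.Adj y z ∧ G.dist x z = i - 1} = c i
  card_a : ∀ i, i ≤ D → ∀ x y : V, G.dist x y = i →
      Nat.card {z : V | G.Adj y z ∧ G.dist x z = i} = a i

/-- `θ` is an eigenvalue of the adjacency matrix of `G`. -/
def IsEig {V : Type*} [Fintype V] [DecidableEq V] (G : SimpleGraph V)
    [DecidableRel G.Adj] (θ : ℝ) : Prop :=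
  ∃ v : V → ℝ, v ≠ 0 ∧ (G.adjMatrix ℝ).mulVec v = θ • v

/-- `θ` is the second largest eigenvalue of `G` (`k` being the largest). -/
def IsSecondLargestEig {V : Type*} [Fintype V] [DecidableEq V] (G : SimpleGraph V)
    [DecidableRel G.Adj] (k θ : ℝ) : Prop :=
  IsEig G θ ∧ θ < k ∧ ∀ η : ℝ, IsEig G η → η ≠ k → η ≤ θ

/-- `θ` is the smallest eigenvalue of `G`. -/
def IsSmallestEig {V : Type*} [Fintype V] [DecidableEq V] (G : SimpleGraph V)
    [DecidableRel G.Adj] (θ : ℝ) : Prop :=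
  IsEig G θ ∧ ∀ η : ℝ, IsEig G η → θ ≤ η

/-- The multiplicity of `θ` as an eigenvalue of the adjacency matrix of `G`. -/
noncomputable def eigMult {V : Type*} [Fintype V] [DecidableEq V] (G : SimpleGraph V)
    [DecidableRel G.Adj] (θ : ℝ) : ℕ :=
  Module.finrank ℝ ↥(Module.End.eigenspace (Matrix.toLin' (G.adjMatrix ℝ)) θ)

/-- A Shilla distance-regular graph: diameter `3` and second largest eigenvalue `a 3`. -/
structure IsShilla {V : Type*} [Fintype V] [DecidableEq V] (G : SimpleGraph V)
    [DecidableRel G.Adj] (b c a : ℕ → ℕ) : Prop where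
  drg : IsDRG G 3 b c a
  second : IsSecondLargestEig G (b 0) ((a 3 : ℝ))

/-- The standard sequence `u₀, u₁, u₂, u₃` associated to the eigenvalue `θ` of a
distance-regular graph of diameter `3` with intersection numbers `b, c, a`. -/
noncomputable def stdSeq (b c a : ℕ → ℕ) (θ : ℝ) : ℕ → ℝ := fun l =>
  match l with
  | 0 => 1
  | 1 => θ / b 0
  | 2 => ((θ - a 1) * (θ / b 0) - c 1) / b 1
  | 3 => ((θ - a 2) * (((θ - a 1) * (θ / b 0) - c 1) / b 1) - c 2 * (θ / b 0)) / b 2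
  | _ => 0

/-- The number `k_l` of vertices at distance `l` from a fixed vertex, for a
distance-regular graph of diameter `3`. -/
noncomputable def kdist (b c : ℕ → ℕ) : ℕ → ℝ := fun l =>
  match l with
  | 0 => 1
  | 1 => b 0
  | 2 => b 0 * b 1 / c 2
  | 3 => b 0 * b 1 * b 2 / (c 2 * c 3)
  | _ => 0

/-- The Krein parameter `q^i_{11}` of a distance-regular graph of diameter `3` with `n`
vertices, where `m1` is the multiplicity of `θ1` and `θi` is the `i`-th eigenvalue:
`q^i_{11} = (m1 * m1 / n) * Σ_l k_l u_l(θ1)^2 u_l(θi)`. -/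
noncomputable def krein11 (n m1 : ℕ) (b c a : ℕ → ℕ) (θ1 θi : ℝ) : ℝ :=
  ((m1 : ℝ) * m1 / n) *
    ∑ l ∈ Finset.range 4, kdist b c l * (stdSeq b c a θ1 l) ^ 2 * stdSeq b c a θi l

/-- For a distance-regular graph of diameter `3` with eigenvalues
`k > θ1 > θ2 > θ3`, being `Q`-polynomial with respect to `θ1` is equivalent to
`q²₁₁ = 0` or `q³₁₁ = 0`. -/
def IsQPolyTheta1 (n m1 : ℕ) (b c a : ℕ → ℕ) (θ1 θ2 θ3 : ℝ) : Prop :=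
  krein11 n m1 b c a θ1 θ2 = 0 ∨ krein11 n m1 b c a θ1 θ3 = 0

/-!
The second eigenvalue `θ₁ = a 3` forces every intersection number of a Shilla graph except `a 3`,
`b 2`, `c 2`. By the Krein condition for `(θ₁, θ₁, θ₁)`, `c 2` is small compared to `b 2`. The
vanishing Krein parameter for `(θ₁, θ₁, θ)` makes `θ` rational, hence an integer, and a root of a
quadratic; for `b(Γ) = 3` this leaves `θ = -6, -7, -8`, and in each case a one-parameter family of
arrays. The multiplicity of `θ₁` is never an integer for `-6` and `-8`. For `-7`, integrality of
that multiplicity, of the valency `k₂` and of the multiplicity of `-7` leaves three arrays.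

The array `{21, 16, 8; 1, 4, 14}` is excluded locally. The vanishing Krein parameter for
`(7, 7, -7)` relates, for a vertex `x` with neighbours `y`, `w`, the number of vertices at distance
three from all of `x`, `y`, `w` to the number of vertices adjacent to all of them. Hence the local
graph at `x` has girth at least five, and if `C y` is the set of the 16 vertices at distance three
from `x` and `y`, then `C y ∩ C w` has 10 elements when `y`, `w` are far apart in the local graph.
The graph of far pairs is then 4-regular with edge-disjoint triangles. Each of the
`21 * 16 / 7 = 48` vertices `z` at distance three from `x` lies in `a 3 = 7` of the sets `C y`, and
those seven `y` are covered by triangles of far pairs, hence by at least three, which account for 18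
ordered far pairs. So there are at least `48 * 18 = 864` triples `(z, y, w)` with `y`, `w` far and
`z ∈ C y ∩ C w`, but exactly `21 * 4 * 10 = 840`.
-/

namespace IsDRG

section Parameters

variable {V : Type*} [Fintype V] {G : SimpleGraph V} {D : ℕ} {b c a : ℕ → ℕ}

theorem exists_adj_dist (h : IsDRG G D b c a) {i : ℕ} (hi : i < D) :
    ∃ x y z, G.dist x y = i ∧ G.Adj y z ∧ G.dist x z = i + 1 := by
  obtain ⟨x, w, hxw⟩ := h.exists_diam
  obtain ⟨p, hp⟩ := h.connected.exists_walk_length_eq_dist x w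
  have dist_getVert : ∀ j ≤ D, G.dist x (p.getVert j) = j := fun j hj => by
    have h1 : G.dist x (p.getVert j) ≤ j := (dist_le (p.take j)).trans (by simp)
    have h2 : G.dist (p.getVert j) w ≤ D - j := (dist_le (p.drop j)).trans (by simp; omega)
    have h3 := h.connected.dist_triangle (u := x) (v := p.getVert j) (w := w)
    omega
  exact ⟨x, p.getVert i, p.getVert (i + 1), dist_getVert i hi.le,
    p.adj_getVert_succ (by omega), dist_getVert (i + 1) hi⟩

theorem exists_dist_eq (h : IsDRG G D b c a) {i : ℕ} (hi : i ≤ D) : ∃ x y, G.dist x y = i := by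
  rcases hi.eq_or_lt with rfl | hi
  · exact h.exists_diam
  · obtain ⟨x, y, -, hxy, -⟩ := h.exists_adj_dist hi
    exact ⟨x, y, hxy⟩

theorem b_pos (h : IsDRG G D b c a) {i : ℕ} (hi : i < D) : 0 < b i := by
  obtain ⟨x, y, z, hxy, hyz, hxz⟩ := h.exists_adj_dist hi
  have : Nonempty {z : V | G.Adj y z ∧ G.dist x z = i + 1} := ⟨z, hyz, hxz⟩
  exact h.card_b i hi.le x y hxy ▸ Nat.card_pos

theorem c_pos (h : IsDRG G D b c a) {i : ℕ} (hi : i < D) : 0 < c (i + 1) := by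
  obtain ⟨x, y, z, hxy, hyz, hxz⟩ := h.exists_adj_dist hi
  have : Nonempty {y : V | G.Adj z y ∧ G.dist x y = i + 1 - 1} := ⟨y, hyz.symm, hxy⟩
  exact h.card_c (i + 1) hi x z hxz ▸ Nat.card_pos

theorem b_diam (h : IsDRG G D b c a) : b D = 0 := by
  obtain ⟨x, y, hxy⟩ := h.exists_diam
  rw [← h.card_b D le_rfl x y hxy, Nat.card_eq_zero]
  exact .inl ⟨fun z => by have := h.le_diam x z; have := z.2.2; omega⟩

theorem a_zero (h : IsDRG G D b c a) : a 0 = 0 := by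
  obtain ⟨x⟩ := h.connected.nonempty
  rw [← h.card_a 0 D.zero_le x x dist_self, Nat.card_eq_zero]
  exact .inl ⟨fun z => z.2.1.ne (h.connected.dist_eq_zero_iff.1 z.2.2)⟩

theorem c_zero (h : IsDRG G D b c a) : c 0 = 0 := by
  obtain ⟨x⟩ := h.connected.nonempty
  rw [← h.card_c 0 D.zero_le x x dist_self, Nat.card_eq_zero]
  exact .inl ⟨fun z => z.2.1.ne (h.connected.dist_eq_zero_iff.1 z.2.2)⟩

theorem c_one (h : IsDRG G D b c a) (hD : 0 < D) : c 1 = 1 := by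
  obtain ⟨x, y, hxy⟩ := h.exists_dist_eq hD
  rw [← h.card_c 1 hD x y hxy, Nat.card_eq_one_iff_exists]
  exact ⟨⟨x, (dist_eq_one_iff_adj.1 hxy).symm, dist_self⟩,
    fun z => Subtype.ext (h.connected.dist_eq_zero_iff.1 z.2.2).symm⟩

theorem sum_neighborFinset [DecidableRel G.Adj] {R : Type*} [Semiring R] (h : IsDRG G D b c a)
    {x y : V} {i : ℕ} (hxy : G.dist x y = i) (f : ℕ → R) :
    ∑ z ∈ G.neighborFinset y, f (G.dist x z) = c i * f (i - 1) + a i * f i + b i * f (i + 1) := by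
  have sum_const (j : ℕ) : ∑ z ∈ G.neighborFinset y, (if G.dist x z = j then f j else 0)
      = Nat.card {z : V | G.Adj y z ∧ G.dist x z = j} * f j := by
    rw [← sum_filter, sum_const, nsmul_eq_mul, Nat.card_eq_card_toFinset]
    congr 3
    ext z
    simp
  have hi : i ≤ D := hxy ▸ h.le_diam x y
  rw [← h.card_c i hi x y hxy, ← h.card_a i hi x y hxy, ← h.card_b i hi x y hxy,
    ← sum_const, ← sum_const, ← sum_const, ← sum_add_distrib, ← sum_add_distrib]
  refine sum_congr rfl fun z hz => ?_
  have hyz : G.Adj y z := (G.mem_neighborFinset y z).1 hz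
  have hxz : i = 0 → G.dist x z ≠ 0 := fun h0 hxz =>
    hyz.ne ((h.connected.dist_eq_zero_iff.1 (hxy.trans h0)).symm.trans
      (h.connected.dist_eq_zero_iff.1 hxz))
  have hd := hyz.diff_dist_adj (u := x)
  obtain hj | hj | ⟨hj, hj'⟩ : G.dist x z = i + 1 ∨ (G.dist x z = i ∧ i ≠ 0) ∨
      (G.dist x z = i - 1 ∧ i ≠ 0) := by omega
  · rw [hj, if_neg (by omega), if_neg (by omega), if_pos rfl, zero_add, zero_add]
  · rw [hj.1, if_neg (by omega), if_pos rfl, if_neg (by omega), zero_add, add_zero]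
  · rw [hj, if_pos rfl, if_neg (by omega), if_neg (by omega), add_zero, add_zero]

theorem degree_eq [DecidableRel G.Adj] (h : IsDRG G D b c a) (x : V) : G.degree x = b 0 := by
  have := h.sum_neighborFinset (dist_self (v := x)) (fun _ => 1)
  simpa [h.a_zero, h.c_zero] using this

theorem sum_params (h : IsDRG G D b c a) {i : ℕ} (hi : i ≤ D) : c i + a i + b i = b 0 := by
  classical
  obtain ⟨x, y, hxy⟩ := h.exists_dist_eq hi
  have := h.sum_neighborFinset hxy (fun _ => 1)
  simpa [h.degree_eq] using this.symm

end Parameters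

end IsDRG

section StandardSequences

/-- The number `k_i = (b_0 ⋯ b_{i-1}) / (c_1 ⋯ c_i)` of vertices at distance `i ≤ D` from a given
vertex of a distance-regular graph; junk for `i > D`. -/
noncomputable def sphereCard (b c : ℕ → ℕ) (i : ℕ) : ℝ := ∏ j ∈ range i, (b j : ℝ) / c (j + 1)

/-- `u` restricted to `0, …, D` is the standard sequence of `θ`, that is, `u i` is the cosine of
the angle between the projections of two vertices at distance `i` to the eigenspace of `θ`.
For `i = 0` and `i = D` the values `u (0 - 1)` and `u (D + 1)` are multiplied by
`c 0 = 0` and `b D = 0`. -/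
structure IsCosineSeq (D : ℕ) (b c a : ℕ → ℕ) (θ : ℝ) (u : ℕ → ℝ) : Prop where
  zero : u 0 = 1
  recurrence : ∀ i ≤ D, c i * u (i - 1) + a i * u i + b i * u (i + 1) = θ * u i

/-- The squared norm `∑ i, k_i (u i)²` of a standard sequence, which is `n / m(θ)` by
Biggs' formula. -/
noncomputable def cosineNorm (D : ℕ) (b c : ℕ → ℕ) (u : ℕ → ℝ) : ℝ :=
  ∑ i ∈ range (D + 1), sphereCard b c i * u i ^ 2

/-- The Krein parameter of the eigenvalues with standard sequences `u`, `v`, `w`, up to a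
positive factor. -/
noncomputable def kreinSum (D : ℕ) (b c : ℕ → ℕ) (u v w : ℕ → ℝ) : ℝ :=
  ∑ i ∈ range (D + 1), sphereCard b c i * (u i * v i * w i)

/-- The distance-`i` matrix of `G`. -/
noncomputable def distMatrix {V : Type*} (G : SimpleGraph V) (i : ℕ) : Matrix V V ℝ :=
  Matrix.of fun x y => if G.dist x y = i then 1 else 0

/-- The Gram matrix of the projections of the vertices to the eigenspace with standard
sequence `u`, normalised to have ones on the diagonal. -/
noncomputable def cosineMatrix {V : Type*} (G : SimpleGraph V) (u : ℕ → ℝ) : Matrix V V ℝ :=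
  Matrix.of fun x y => u (G.dist x y)

theorem distMatrix_one {V : Type*} (G : SimpleGraph V) [DecidableRel G.Adj] :
    distMatrix G 1 = G.adjMatrix ℝ := by
  ext x y
  simp [distMatrix]

theorem transpose_cosineMatrix {V : Type*} (G : SimpleGraph V) (u : ℕ → ℝ) :
    (cosineMatrix G u).transpose = cosineMatrix G u := by
  ext x y
  simp only [Matrix.transpose_apply, cosineMatrix, Matrix.of_apply, G.dist_comm]

theorem sum_sq_sum_mul_mul {α β γ ι R : Type*} [Fintype α] [Fintype β] [Fintype γ] [Fintype ι]
    [CommSemiring R] (A : Matrix α ι R) (B : Matrix β ι R) (C : Matrix γ ι R) :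
    ∑ p : α × β × γ, (∑ z, A p.1 z * B p.2.1 z * C p.2.2 z) ^ 2
      = ∑ z, ∑ z', (A.transpose * A) z z' * (B.transpose * B) z z' * (C.transpose * C) z z' := by
  simp only [sq, sum_mul_sum]
  rw [sum_comm]
  refine sum_congr rfl fun z _ => ?_
  rw [sum_comm]
  refine sum_congr rfl fun z' _ => ?_
  simp only [Matrix.mul_apply, Matrix.transpose_apply, Fintype.sum_prod_type]
  rw [mul_assoc, sum_mul_sum, sum_mul_sum]
  simp only [mul_sum]
  exact sum_congr rfl fun x _ => sum_congr rfl fun y _ => sum_congr rfl fun w _ => by ring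

end StandardSequences

namespace IsDRG

section Eigenspaces

variable {V : Type*} [Fintype V] {G : SimpleGraph V} {D : ℕ} {b c a : ℕ → ℕ} {θ : ℝ}
  {u : ℕ → ℝ} {v : V → ℝ}

theorem sphereCard_succ (h : IsDRG G D b c a) {i : ℕ} (hi : i < D) :
    sphereCard b c (i + 1) * c (i + 1) = sphereCard b c i * b i := by
  have := h.c_pos hi
  rw [sphereCard, prod_range_succ, ← sphereCard]
  field_simp

theorem sphereCard_pos (h : IsDRG G D b c a) {i : ℕ} (hi : i ≤ D) : 0 < sphereCard b c i :=
  prod_pos fun j hj => by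
    have hj := (mem_range.1 hj).trans_le hi
    have := h.b_pos hj
    have := h.c_pos hj
    positivity

theorem cosineNorm_pos (h : IsDRG G D b c a) (hu : u 0 = 1) : 0 < cosineNorm D b c u :=
  sum_pos' (fun _ hi => mul_nonneg (h.sphereCard_pos (mem_range_succ_iff.1 hi)).le (sq_nonneg _))
    ⟨0, by simp, by simp [hu, sphereCard]⟩

theorem distMatrix_zero [DecidableEq V] (h : IsDRG G D b c a) : distMatrix G 0 = 1 := by
  ext x y
  simp [distMatrix, Matrix.one_apply, h.connected.dist_eq_zero_iff]

theorem sum_dist_mul (h : IsDRG G D b c a) (f : ℕ → ℝ) (v : V → ℝ) (x : V) :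
    ∑ y, f (G.dist x y) * v y
      = ∑ i ∈ range (D + 1), f i * (distMatrix G i).mulVec v x := by
  simp only [Matrix.mulVec, dotProduct, distMatrix, Matrix.of_apply, ite_mul, one_mul, zero_mul,
    mul_sum]
  rw [sum_comm]
  refine sum_congr rfl fun y _ => ?_
  simp [h.le_diam x y]

theorem distMatrix_succ_mul_adjMatrix [DecidableRel G.Adj] (h : IsDRG G D b c a) (i : ℕ) :
    distMatrix G (i + 1) * G.adjMatrix ℝ = (b i : ℝ) • distMatrix G i
      + (a (i + 1) : ℝ) • distMatrix G (i + 1) + (c (i + 2) : ℝ) • distMatrix G (i + 2) := by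
  ext x y
  rw [mul_adjMatrix_apply]
  simp only [distMatrix, Matrix.of_apply, Matrix.add_apply, Matrix.smul_apply, smul_eq_mul]
  rw [h.sum_neighborFinset rfl fun j => if j = i + 1 then (1 : ℝ) else 0]
  obtain hj | hj | hj | hj : G.dist x y = i ∨ G.dist x y = i + 1 ∨ G.dist x y = i + 2 ∨
      (G.dist x y ≠ i ∧ G.dist x y ≠ i + 1 ∧ G.dist x y - 1 ≠ i + 1) := by omega
  · simp [hj, show i - 1 ≠ i + 1 by omega]
  · simp [hj]
  · simp [hj]
  · simp [hj, show G.dist x y ≠ i + 2 by omega]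

theorem distMatrix_mulVec [DecidableRel G.Adj] (h : IsDRG G D b c a)
    (hv : (G.adjMatrix ℝ).mulVec v = θ • v) (hu0 : u 0 = 1)
    (hu : ∀ i < D, c i * u (i - 1) + a i * u i + b i * u (i + 1) = θ * u i) {i : ℕ} (hi : i ≤ D) :
    (distMatrix G i).mulVec v = (sphereCard b c i * u i) • v := by
  classical
  induction i using Nat.twoStepInduction with
  | zero => simp [h.distMatrix_zero, sphereCard, hu0]
  | one =>
    have hu1 : b 0 * u 1 = θ := by simpa [h.c_zero, h.a_zero, hu0] using hu 0 hi
    rw [distMatrix_one, hv, ← hu1]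
    simp [sphereCard, h.c_one hi]
  | more i ih ih' =>
    have hc : (c (i + 2) : ℝ) ≠ 0 := by exact_mod_cast (h.c_pos hi).ne'
    have hmul : θ • (distMatrix G (i + 1)).mulVec v = (b i : ℝ) • (distMatrix G i).mulVec v
        + (a (i + 1) : ℝ) • (distMatrix G (i + 1)).mulVec v
        + (c (i + 2) : ℝ) • (distMatrix G (i + 2)).mulVec v := by
      rw [← Matrix.mulVec_smul, ← hv, Matrix.mulVec_mulVec, h.distMatrix_succ_mul_adjMatrix]
      simp only [Matrix.add_mulVec, Matrix.smul_mulVec]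
    rw [ih (by omega), ih' (by omega)] at hmul
    have hk : sphereCard b c (i + 1) * c (i + 1) = sphereCard b c i * b i :=
      h.sphereCard_succ (by omega)
    have hk' : sphereCard b c (i + 2) * c (i + 2) = sphereCard b c (i + 1) * b (i + 1) :=
      h.sphereCard_succ (i := i + 1) hi
    have hrec := hu (i + 1) hi
    rw [Nat.add_sub_cancel] at hrec
    ext x
    have hx := congrFun hmul x
    simp only [Pi.add_apply, Pi.smul_apply, smul_eq_mul] at hx ⊢
    refine mul_left_cancel₀ hc ?_
    linear_combination -hx - sphereCard b c (i + 1) * v x * hrec + u i * v x * hk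
      - u (i + 2) * v x * hk'

theorem isCosineSeq_of_isEig [DecidableEq V] [DecidableRel G.Adj] (h : IsDRG G D b c a)
    (hθ : IsEig G θ) (hD : 0 < D) (hu0 : u 0 = 1)
    (hu : ∀ i < D, c i * u (i - 1) + a i * u i + b i * u (i + 1) = θ * u i) :
    IsCosineSeq D b c a θ u := by
  refine ⟨hu0, fun i hi => hi.lt_or_eq.elim (hu i) ?_⟩
  rintro rfl
  obtain ⟨d, rfl⟩ := Nat.exists_eq_succ_of_ne_zero hD.ne'
  obtain ⟨v, hv0, hv⟩ := hθ
  obtain ⟨x, hx⟩ := Function.ne_iff.1 hv0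
  have distMatrix_add_two : distMatrix G (d + 2) = 0 := by
    ext x y
    have := h.le_diam x y
    simp only [distMatrix, Matrix.of_apply, Matrix.zero_apply]
    exact if_neg (by omega)
  have hmul : θ • (distMatrix G (d + 1)).mulVec v = (b d : ℝ) • (distMatrix G d).mulVec v
      + (a (d + 1) : ℝ) • (distMatrix G (d + 1)).mulVec v := by
    rw [← Matrix.mulVec_smul, ← hv, Matrix.mulVec_mulVec, h.distMatrix_succ_mul_adjMatrix,
      distMatrix_add_two]
    simp only [Matrix.add_mulVec, Matrix.smul_mulVec, smul_zero, add_zero]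
  rw [h.distMatrix_mulVec hv hu0 hu le_rfl, h.distMatrix_mulVec hv hu0 hu d.le_succ] at hmul
  have hk := h.sphereCard_succ d.lt_succ_self
  have hkpos := h.sphereCard_pos (le_refl (d + 1))
  have hb := h.b_diam
  have hx' := congrFun hmul x
  simp only [Pi.add_apply, Pi.smul_apply, smul_eq_mul, Nat.succ_eq_add_one] at hx' hk hb ⊢
  refine mul_left_cancel₀ (mul_ne_zero hkpos.ne' hx) ?_
  rw [hb, Nat.cast_zero, Nat.add_sub_cancel]
  linear_combination -hx' + u d * v x * hk

theorem sum_dist (h : IsDRG G D b c a) (f : ℕ → ℝ) (x : V) :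
    ∑ y, f (G.dist x y) = ∑ i ∈ range (D + 1), sphereCard b c i * f i := by
  classical
  have mulVec_one : (G.adjMatrix ℝ).mulVec 1 = (b 0 : ℝ) • (1 : V → ℝ) := by
    ext x
    simp [h.degree_eq]
  have recurrence_one : ∀ i < D, (c i : ℝ) * (1 : ℕ → ℝ) (i - 1) + a i * (1 : ℕ → ℝ) i
      + b i * (1 : ℕ → ℝ) (i + 1) = b 0 * (1 : ℕ → ℝ) i := fun i hi => by
    simpa using congrArg (Nat.cast (R := ℝ)) (h.sum_params hi.le)
  have := h.sum_dist_mul f 1 x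
  simp only [Pi.one_apply, mul_one] at this
  rw [this]
  refine sum_congr rfl fun i hi => ?_
  rw [h.distMatrix_mulVec mulVec_one rfl recurrence_one (mem_range_succ_iff.1 hi)]
  simp [mul_comm]

theorem cosineMatrix_mulVec [DecidableRel G.Adj] (h : IsDRG G D b c a)
    (hu : IsCosineSeq D b c a θ u) (hv : (G.adjMatrix ℝ).mulVec v = θ • v) :
    (cosineMatrix G u).mulVec v = cosineNorm D b c u • v := by
  ext x
  simp only [Matrix.mulVec, dotProduct, cosineMatrix, Matrix.of_apply, Pi.smul_apply, smul_eq_mul]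
  rw [h.sum_dist_mul, cosineNorm, sum_mul]
  refine sum_congr rfl fun i hi => ?_
  rw [h.distMatrix_mulVec hv hu.zero (fun j hj => hu.recurrence j hj.le)
    (mem_range_succ_iff.1 hi), Pi.smul_apply, smul_eq_mul]
  ring

theorem adjMatrix_mul_cosineMatrix [DecidableRel G.Adj] (h : IsDRG G D b c a)
    (hu : IsCosineSeq D b c a θ u) :
    G.adjMatrix ℝ * cosineMatrix G u = θ • cosineMatrix G u := by
  ext x y
  rw [adjMatrix_mul_apply]
  simp only [cosineMatrix, Matrix.of_apply, Matrix.smul_apply, smul_eq_mul, G.dist_comm (v := y)]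
  rw [h.sum_neighborFinset rfl, hu.recurrence _ (h.le_diam y x)]

theorem cosineMatrix_mul_self (h : IsDRG G D b c a) (hu : IsCosineSeq D b c a θ u) :
    cosineMatrix G u * cosineMatrix G u = cosineNorm D b c u • cosineMatrix G u := by
  classical
  ext x y
  refine congrFun (h.cosineMatrix_mulVec hu (v := fun z => cosineMatrix G u z y) ?_) x
  ext z
  exact congrFun (congrFun (h.adjMatrix_mul_cosineMatrix hu) z) y

theorem eigMult_mul_cosineNorm [DecidableEq V] [DecidableRel G.Adj] (h : IsDRG G D b c a)
    (hu : IsCosineSeq D b c a θ u) :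
    eigMult G θ * cosineNorm D b c u = Fintype.card V := by
  have hs := (h.cosineNorm_pos hu.zero).ne'
  have hproj : LinearMap.IsProj (Module.End.eigenspace (Matrix.toLin' (G.adjMatrix ℝ)) θ)
      (Matrix.toLin' ((cosineNorm D b c u)⁻¹ • cosineMatrix G u)) := by
    refine ⟨fun v => ?_, fun v hv => ?_⟩
    · rw [Module.End.mem_eigenspace_iff, Matrix.toLin'_apply, Matrix.toLin'_apply,
        Matrix.mulVec_mulVec, Matrix.mul_smul, h.adjMatrix_mul_cosineMatrix hu, smul_comm,
        Matrix.smul_mulVec]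
    · rw [Module.End.mem_eigenspace_iff, Matrix.toLin'_apply] at hv
      rw [Matrix.toLin'_apply, Matrix.smul_mulVec, h.cosineMatrix_mulVec hu hv, smul_smul,
        inv_mul_cancel₀ hs, one_smul]
  have trace_cosineMatrix : (cosineMatrix G u).trace = Fintype.card V := by
    simp [Matrix.trace, cosineMatrix, hu.zero]
  have htrace := hproj.trace
  rw [Matrix.trace_toLin'_eq, Matrix.trace_smul, trace_cosineMatrix, smul_eq_mul] at htrace
  rw [eigMult, ← htrace]
  field_simp

end Eigenspaces

section Krein

variable {V : Type*} [Fintype V] {G : SimpleGraph V} {D : ℕ} {b c a : ℕ → ℕ}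
  {θ η ζ : ℝ} {u v w : ℕ → ℝ}

theorem sum_sq_triple (h : IsDRG G D b c a) (hu : IsCosineSeq D b c a θ u)
    (hv : IsCosineSeq D b c a η v) (hw : IsCosineSeq D b c a ζ w) :
    ∑ p : V × V × V,
        (∑ z, u (G.dist p.1 z) * v (G.dist p.2.1 z) * w (G.dist p.2.2 z)) ^ 2
      = cosineNorm D b c u * cosineNorm D b c v * cosineNorm D b c w * Fintype.card V
        * kreinSum D b c u v w := by
  have hsum := sum_sq_sum_mul_mul (cosineMatrix G u) (cosineMatrix G v) (cosineMatrix G w)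
  simp only [transpose_cosineMatrix, h.cosineMatrix_mul_self hu, h.cosineMatrix_mul_self hv,
    h.cosineMatrix_mul_self hw] at hsum
  refine hsum.trans ?_
  calc ∑ z, ∑ z', (cosineNorm D b c u • cosineMatrix G u) z z'
        * (cosineNorm D b c v • cosineMatrix G v) z z'
        * (cosineNorm D b c w • cosineMatrix G w) z z'
      = ∑ z, ∑ z', cosineNorm D b c u * cosineNorm D b c v * cosineNorm D b c w
          * (fun i => u i * v i * w i) (G.dist z z') := by
        refine sum_congr rfl fun z _ => sum_congr rfl fun z' _ => ?_
        simp only [cosineMatrix, Matrix.smul_apply, Matrix.of_apply, smul_eq_mul]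
        ring
    _ = _ := by
        simp only [← mul_sum, h.sum_dist fun i => u i * v i * w i, sum_const, card_univ,
          nsmul_eq_mul, kreinSum]
        ring

theorem kreinSum_nonneg (h : IsDRG G D b c a) (hu : IsCosineSeq D b c a θ u)
    (hv : IsCosineSeq D b c a η v) (hw : IsCosineSeq D b c a ζ w) :
    0 ≤ kreinSum D b c u v w := by
  have := h.connected.nonempty
  have hpos : 0 < cosineNorm D b c u * cosineNorm D b c v * cosineNorm D b c w
      * Fintype.card V := by
    have := h.cosineNorm_pos hu.zero
    have := h.cosineNorm_pos hv.zero
    have := h.cosineNorm_pos hw.zero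
    have : 0 < Fintype.card V := Fintype.card_pos
    positivity
  refine nonneg_of_mul_nonneg_right ?_ hpos
  rw [← h.sum_sq_triple hu hv hw]
  positivity

theorem sum_triple_eq_zero (h : IsDRG G D b c a) (hu : IsCosineSeq D b c a θ u)
    (hv : IsCosineSeq D b c a η v) (hw : IsCosineSeq D b c a ζ w)
    (hK : kreinSum D b c u v w = 0) (x y t : V) :
    ∑ z, u (G.dist x z) * v (G.dist y z) * w (G.dist t z) = 0 := by
  have hs := h.sum_sq_triple hu hv hw
  rw [hK, mul_zero, sum_eq_zero_iff_of_nonneg fun _ _ => sq_nonneg _] at hs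
  exact pow_eq_zero_iff two_ne_zero |>.1 (hs (x, y, t) (mem_univ _))

end Krein

end IsDRG

section FarSystems

variable {α β : Type*}

/-- The graph in which two vertices are adjacent when their distance in `H` is at least `3`
(possibly infinite). -/
def farGraph (H : SimpleGraph α) : SimpleGraph α where
  Adj y w := y ≠ w ∧ ¬H.Adj y w ∧ ∀ u, H.Adj y u → ¬H.Adj w u
  symm := ⟨fun _ _ h => ⟨h.1.symm, fun h' => h.2.1 h'.symm, fun u h1 h2 => h.2.2 u h2 h1⟩⟩
  loopless := ⟨fun _ h => h.1 rfl⟩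

instance decidableRelFarGraphAdj [Fintype α] [DecidableEq α] (H : SimpleGraph α)
    [DecidableRel H.Adj] : DecidableRel (farGraph H).Adj := fun y w =>
  inferInstanceAs (Decidable (y ≠ w ∧ ¬H.Adj y w ∧ ∀ u, H.Adj y u → ¬H.Adj w u))

/-- A graph of girth at least five, expressed as the absence of triangles and quadrangles. -/
structure FiveLeGirth (H : SimpleGraph α) : Prop where
  not_adj : ∀ ⦃y w u⦄, H.Adj y u → H.Adj w u → ¬H.Adj y w
  eq_of_common : ∀ ⦃y w u u'⦄, y ≠ w → H.Adj y u → H.Adj w u → H.Adj y u' → H.Adj w u' → u = u'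

/-- The combinatorics of the local graph `H` at a vertex `x` of a distance-regular graph with
intersection array `{21, 16, 8; 1, 4, 14}`: for a neighbour `y` of `x`, the set `C y` consists of
the vertices at distance three from both `x` and `y`. -/
structure IsFarSystem [Fintype α] [DecidableEq β] (H : SimpleGraph α) [DecidableRel H.Adj]
    (C : α → Finset β) : Prop extends FiveLeGirth H where
  card_eq : Fintype.card α = 21
  regular : H.IsRegularOfDegree 4
  card_set : ∀ y, #(C y) = 16
  card_inter_of_adj : ∀ ⦃y w⦄, H.Adj y w → #(C y ∩ C w) = 2
  card_inter_of_common : ∀ ⦃y w u⦄, y ≠ w → H.Adj y u → H.Adj w u → #(C y ∩ C w) = 4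
  card_inter_of_far : ∀ ⦃y w⦄, (farGraph H).Adj y w → #(C y ∩ C w) = 10

theorem exists_common_of_not_farGraph_adj {H : SimpleGraph α} {y w : α} (hne : y ≠ w)
    (hadj : ¬H.Adj y w) (hfar : ¬(farGraph H).Adj y w) : ∃ u, H.Adj y u ∧ H.Adj w u := by
  by_contra! hcon
  exact hfar ⟨hne, hadj, hcon⟩

theorem FiveLeGirth.degree_farGraph [Fintype α] [DecidableEq α] {H : SimpleGraph α}
    [DecidableRel H.Adj] (hH : FiveLeGirth H) {d : ℕ} (hd : H.IsRegularOfDegree d) (y : α) :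
    (farGraph H).degree y + d ^ 2 + 1 = Fintype.card α := by
  set S := (H.neighborFinset y).biUnion fun u => (H.neighborFinset u).erase y with hS
  have card_S : #S = d * (d - 1) := by
    rw [hS, card_biUnion, sum_const_nat (m := d - 1), card_neighborFinset_eq_degree, hd y]
    · intro u hu
      rw [card_erase_of_mem (by simpa [H.adj_comm] using hu), card_neighborFinset_eq_degree, hd u]
    · intro u hu u' hu' hne
      rw [Function.onFun, Finset.disjoint_left]
      intro v hv hv'
      simp only [mem_erase, mem_coe, mem_neighborFinset] at hv hv' hu hu'
      exact hne (hH.eq_of_common hv.1.symm hu hv.2.symm hu' hv'.2.symm)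
  have disjoint_S : Disjoint (H.neighborFinset y) S := by
    rw [Finset.disjoint_left]
    intro v hv hv'
    simp only [hS, mem_biUnion, mem_erase, mem_neighborFinset] at hv hv'
    obtain ⟨u, hu, -, huv⟩ := hv'
    exact hH.not_adj hu huv.symm hv
  have notMem : y ∉ H.neighborFinset y ∪ S := by simp [hS]
  have neighborFinset_compl :
      ((farGraph H).neighborFinset y)ᶜ = insert y (H.neighborFinset y ∪ S) := by
    ext w
    rw [mem_compl, mem_neighborFinset]
    change ¬(y ≠ w ∧ ¬H.Adj y w ∧ ∀ u, H.Adj y u → ¬H.Adj w u) ↔ _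
    simp only [hS, mem_insert, mem_union, mem_biUnion, mem_erase, mem_neighborFinset]
    grind [SimpleGraph.adj_comm]
  have hcard := card_compl_add_card ((farGraph H).neighborFinset y)
  rw [neighborFinset_compl, card_insert_of_notMem notMem, card_union_of_disjoint disjoint_S,
    card_S, card_neighborFinset_eq_degree, card_neighborFinset_eq_degree, hd y] at hcard
  rw [← hcard]
  cases d with
  | zero => ring
  | succ d => rw [Nat.add_sub_cancel]; ring

namespace IsFarSystem

variable [Fintype α] [DecidableEq β] {H : SimpleGraph α} [DecidableRel H.Adj] {C : α → Finset β}

theorem card_inter_le_four (h : IsFarSystem H C) {y w : α} (hne : y ≠ w)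
    (hfar : ¬(farGraph H).Adj y w) : #(C y ∩ C w) ≤ 4 := by
  by_cases hadj : H.Adj y w
  · rw [h.card_inter_of_adj hadj]
    norm_num
  · obtain ⟨u, hyu, hwu⟩ := exists_common_of_not_farGraph_adj hne hadj hfar
    exact (h.card_inter_of_common hne hyu hwu).le

theorem le_card_inter_union_inter (h : IsFarSystem H C) {y p q : α} (hp : (farGraph H).Adj y p)
    (hq : (farGraph H).Adj y q) : 20 ≤ #(C y ∩ C p ∪ C y ∩ C q) + #(C p ∩ C q) := by
  have hunion := card_union_add_card_inter (C y ∩ C p) (C y ∩ C q)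
  rw [h.card_inter_of_far hp, h.card_inter_of_far hq] at hunion
  have hinter : #(C y ∩ C p ∩ (C y ∩ C q)) ≤ #(C p ∩ C q) :=
    card_le_card (inter_subset_inter inter_subset_right inter_subset_right)
  omega

theorem subset_union (h : IsFarSystem H C) {y p q : α} (hp : (farGraph H).Adj y p)
    (hq : (farGraph H).Adj y q) (hpq : p ≠ q) (hfar : ¬(farGraph H).Adj p q) :
    C y ⊆ C p ∪ C q := by
  have h20 := h.le_card_inter_union_inter hp hq
  have h4 := h.card_inter_le_four hpq hfar
  have hsub : C y ∩ C p ∪ C y ∩ C q ⊆ C y := union_subset inter_subset_left inter_subset_left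
  rw [← eq_of_subset_of_card_le hsub (by rw [h.card_set]; omega)]
  exact union_subset_union inter_subset_right inter_subset_right

theorem not_adj_of_farGraph_adj (h : IsFarSystem H C) {y p q : α} (hp : (farGraph H).Adj y p)
    (hq : (farGraph H).Adj y q) : ¬H.Adj p q := fun hpq => by
  have h20 := h.le_card_inter_union_inter hp hq
  have h16 : #(C y ∩ C p ∪ C y ∩ C q) ≤ 16 :=
    (card_le_card (union_subset inter_subset_left inter_subset_left)).trans_eq (h.card_set y)
  rw [h.card_inter_of_adj hpq] at h20
  omega

theorem exists_common_of_adj_of_far (h : IsFarSystem H C) {y u w : α} (hu : H.Adj y u)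
    (hw : (farGraph H).Adj y w) : ∃ v, H.Adj u v ∧ H.Adj w v := by
  have exists_common : ∀ v, H.Adj w v → ∃ u, H.Adj y u ∧ H.Adj v u := fun v hv =>
    exists_common_of_not_farGraph_adj (fun hyv => hw.2.1 (hyv ▸ hv.symm))
      (fun hyv => hw.2.2 v hyv hv) fun hyv => h.not_adj_of_farGraph_adj hw hyv hv
  choose! g hyg hvg using exists_common
  have injOn : Set.InjOn g (H.neighborFinset w) := fun v hv v' hv' hvv' => by
    simp only [coe_neighborFinset, mem_neighborSet] at hv hv'
    have hne : w ≠ g v := fun hwg => hw.2.1 (by rw [hwg]; exact hyg v hv)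
    exact h.eq_of_common hne hv (hvg v hv).symm hv' (hvv' ▸ (hvg v' hv').symm)
  have surjOn : Set.SurjOn g (H.neighborFinset w) (H.neighborFinset y) :=
    surjOn_of_injOn_of_card_le g (fun v hv => by simpa using hyg v (by simpa using hv)) injOn
      (by simp only [card_neighborFinset_eq_degree, h.regular.degree_eq, le_refl])
  obtain ⟨v, hv, rfl⟩ := surjOn (by simpa using hu)
  rw [coe_neighborFinset, mem_neighborSet] at hv
  exact ⟨v, (hvg v hv).symm, hv⟩

theorem card_biUnion_eq (h : IsFarSystem H C) (h7 : ∀ y, ∀ z ∈ C y, #{y' | z ∈ C y'} = 7) :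
    #(univ.biUnion C) = 48 := by
  have := sum_card_bipartiteAbove_eq_sum_card_bipartiteBelow (s := univ) (t := univ.biUnion C)
    fun y z => z ∈ C y
  rw [sum_const_nat (m := 16), sum_const_nat (m := 7), card_univ, h.card_eq] at this
  · omega
  · intro z hz
    obtain ⟨y, -, hy⟩ := mem_biUnion.1 hz
    exact h7 y z hy
  · intro y _
    rw [bipartiteAbove, filter_mem_eq_inter,
      inter_eq_right.2 (subset_biUnion_of_mem C (mem_univ y)), h.card_set]

theorem degree_farGraph [DecidableEq α] (h : IsFarSystem H C) (y : α) :
    (farGraph H).degree y = 4 := by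
  have := h.toFiveLeGirth.degree_farGraph h.regular y
  rw [h.card_eq] at this
  omega

theorem exists_farGraph_adj [DecidableEq α] (h : IsFarSystem H C) {y : α} {t : Finset α}
    (ht : t ⊆ (farGraph H).neighborFinset y) (h3 : 3 ≤ #t) :
    ∃ p ∈ t, ∃ q ∈ t, (farGraph H).Adj p q := by
  by_contra! hcon
  obtain ⟨p, q, r, hp, hq, hr, hpq, hpr, hqr⟩ := two_lt_card_iff.1 h3
  have hpfar := (mem_neighborFinset _ _ _).1 (ht hp)
  have hqfar := (mem_neighborFinset _ _ _).1 (ht hq)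
  have hrfar := (mem_neighborFinset _ _ _).1 (ht hr)
  have h20 := h.le_card_inter_union_inter hpfar hqfar
  have hinter_pq := h.card_inter_le_four hpq (hcon p hp q hq)
  have hinter_pr := h.card_inter_le_four hpr (hcon p hp r hr)
  have hinter_qr := h.card_inter_le_four hqr (hcon q hq r hr)
  have hinter_r := h.card_inter_of_far hrfar
  have hunion := card_union_add_card_inter (C y ∩ C p ∪ C y ∩ C q) (C y ∩ C r)
  have hinter : #((C y ∩ C p ∪ C y ∩ C q) ∩ (C y ∩ C r)) ≤ #(C p ∩ C r ∪ C q ∩ C r) :=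
    card_le_card fun z hz => by simp only [mem_inter, mem_union] at hz ⊢; tauto
  have hinter_union := card_union_le (C p ∩ C r) (C q ∩ C r)
  have h16 : #(C y ∩ C p ∪ C y ∩ C q ∪ C y ∩ C r) ≤ 16 :=
    (card_le_card (union_subset (union_subset inter_subset_left inter_subset_left)
      inter_subset_left)).trans_eq (h.card_set y)
  omega

theorem exists_pair_common (h : IsFarSystem H C) {y u : α} (hu : H.Adj y u) :
    ∃ p q v, (farGraph H).Adj y p ∧ (farGraph H).Adj y q ∧ p ≠ q ∧ H.Adj u v ∧ H.Adj p v ∧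
      H.Adj q v := by
  classical
  choose! g hug hwg using fun w => h.exists_common_of_adj_of_far (w := w) hu
  have hcard : #((H.neighborFinset u).erase y) < #((farGraph H).neighborFinset y) := by
    rw [card_neighborFinset_eq_degree, h.degree_farGraph,
      card_erase_of_mem (by simpa using hu.symm), card_neighborFinset_eq_degree, h.regular u]
    norm_num
  obtain ⟨p, hp, q, hq, hpq, heq⟩ := exists_ne_map_eq_of_card_lt_of_maps_to hcard (f := g)
    fun w hw => by
      rw [mem_coe, mem_neighborFinset] at hw
      rw [mem_coe, mem_erase, mem_neighborFinset]
      exact ⟨fun hgy => hw.2.1 (hgy ▸ (hwg w hw).symm), hug w hw⟩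
  rw [mem_neighborFinset] at hp hq
  exact ⟨p, q, g p, hp, hq, hpq, hug p hp, hwg p hp, heq ▸ hwg q hq⟩

theorem card_edges_neighborFinset_farGraph_le [DecidableEq α] (h : IsFarSystem H C) (y : α) :
    #{e ∈ ((farGraph H).neighborFinset y).sym2 | e ∈ (farGraph H).edgeSet} ≤ 2 := by
  set N := (farGraph H).neighborFinset y with hN
  set P := N.offDiag.image Sym2.mk.uncurry with hP
  have card_P : #P = 6 := by
    rw [hP, Sym2.card_image_offDiag, hN, card_neighborFinset_eq_degree, h.degree_farGraph]
    rfl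
  choose! p q v hp hq hpq hu hpv hqv using fun u => h.exists_pair_common (y := y) (u := u)
  have injOn : Set.InjOn (fun u => s(p u, q u)) (H.neighborFinset y) := fun u hyu u' hyu' he => by
    rw [mem_coe, mem_neighborFinset] at hyu hyu'
    have hvv' : v u = v u' := by
      rcases Sym2.eq_iff.1 he with ⟨hpp', hqq'⟩ | ⟨hpq', hqp'⟩
      · exact h.eq_of_common (hpq u hyu) (hpv u hyu) (hqv u hyu) (hpp' ▸ hpv u' hyu')
          (hqq' ▸ hqv u' hyu')
      · exact h.eq_of_common (hpq u hyu) (hpv u hyu) (hqv u hyu) (hpq' ▸ hqv u' hyu')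
          (hqp' ▸ hpv u' hyu')
    have hne : y ≠ v u := fun hyv => (hp u hyu).2.1 (by rw [hyv]; exact (hpv u hyu).symm)
    exact h.eq_of_common hne hyu (hu u hyu).symm hyu' (hvv' ▸ (hu u' hyu').symm)
  have card_image := card_image_of_injOn injOn
  rw [card_neighborFinset_eq_degree, h.regular y] at card_image
  have disjoint : Disjoint ((H.neighborFinset y).image fun u => s(p u, q u))
      {e ∈ N.sym2 | e ∈ (farGraph H).edgeSet} := by
    rw [Finset.disjoint_left]
    intro e he hfar
    obtain ⟨u, hyu, rfl⟩ := mem_image.1 he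
    rw [mem_neighborFinset] at hyu
    exact (mem_filter.1 hfar).2.2.2 (v u) (hpv u hyu) (hqv u hyu)
  have hsub : (H.neighborFinset y).image (fun u => s(p u, q u))
      ∪ {e ∈ N.sym2 | e ∈ (farGraph H).edgeSet} ⊆ P := by
    refine union_subset (fun e he => ?_) fun e => Sym2.inductionOn e fun s t he => ?_
    · obtain ⟨u, hyu, rfl⟩ := mem_image.1 he
      rw [mem_neighborFinset] at hyu
      exact mem_image_of_mem _ (mem_offDiag.2
        ⟨by simpa [hN] using hp u hyu, by simpa [hN] using hq u hyu, hpq u hyu⟩)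
    · rw [mem_filter, mk_mem_sym2_iff] at he
      exact mem_image_of_mem _ (mem_offDiag.2 ⟨he.1.1, he.1.2, ((mem_edgeSet _).1 he.2).ne⟩)
  have := card_le_card hsub
  rw [card_union_of_disjoint disjoint] at this
  omega

theorem eq_of_farGraph_adj (h : IsFarSystem H C) {y p q r : α} (hp : (farGraph H).Adj y p)
    (hq : (farGraph H).Adj y q) (hr : (farGraph H).Adj y r) (hpq : (farGraph H).Adj p q)
    (hpr : (farGraph H).Adj p r) : q = r := by
  classical
  by_contra hqr
  have hmem : p ∈ (farGraph H).neighborFinset y := by simpa using hp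
  obtain ⟨s, hs, t, ht, hst⟩ := h.exists_farGraph_adj (erase_subset p _) (by
    rw [card_erase_of_mem hmem, card_neighborFinset_eq_degree, h.degree_farGraph])
  rw [mem_erase, mem_neighborFinset] at hs ht
  have hsub : {s(p, q), s(p, r), s(s, t)} ⊆
      {e ∈ ((farGraph H).neighborFinset y).sym2 | e ∈ (farGraph H).edgeSet} := by
    simp only [insert_subset_iff, singleton_subset_iff, mem_filter, mk_mem_sym2_iff,
      mem_neighborFinset, mem_edgeSet]
    exact ⟨⟨⟨hp, hq⟩, hpq⟩, ⟨⟨hp, hr⟩, hpr⟩, ⟨hs.2, ht.2⟩, hst⟩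
  have card_three : #{s(p, q), s(p, r), s(s, t)} = 3 :=
    card_eq_three.2 ⟨_, _, _, by simp [hqr, hpr.ne], by simp [hs.1.symm, ht.1.symm],
      by simp [hs.1.symm, ht.1.symm], rfl⟩
  have := (card_le_card hsub).trans (h.card_edges_neighborFinset_farGraph_le y)
  omega

theorem edgeDisjointTriangles_farGraph (h : IsFarSystem H C) :
    (farGraph H).EdgeDisjointTriangles := by
  classical
  rw [edgeDisjointTriangles_iff_mem_sym2_subsingleton]
  have exists_eq_insert : ∀ {y p : α} {t : Finset α}, y ≠ p →
      t ∈ {t ∈ (farGraph H).cliqueSet 3 | s(y, p) ∈ t.sym2} →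
      ∃ q, t = {y, p, q} ∧ (farGraph H).Adj y p ∧ (farGraph H).Adj y q ∧ (farGraph H).Adj p q := by
    intro y p t hyp ht
    obtain ⟨hclique, hmem⟩ := ht
    rw [mk_mem_sym2_iff] at hmem
    obtain ⟨q, hq⟩ : ∃ q, (t.erase y).erase p = {q} := by
      rw [← card_eq_one, card_erase_of_mem (mem_erase.2 ⟨hyp.symm, hmem.2⟩),
        card_erase_of_mem hmem.1, hclique.card_eq]
    have ht : t = {y, p, q} := by
      rw [← hq, insert_erase (mem_erase.2 ⟨hyp.symm, hmem.2⟩), insert_erase hmem.1]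
    rw [ht, mem_cliqueSet_iff, is3Clique_triple_iff] at hclique
    exact ⟨q, ht, hclique⟩
  refine fun e => Sym2.inductionOn e fun y p hyp t ht t' ht' => ?_
  obtain ⟨q, rfl, hp, hq, hpq⟩ := exists_eq_insert hyp ht
  obtain ⟨q', rfl, -, hq', hpq'⟩ := exists_eq_insert hyp ht'
  rw [h.eq_of_farGraph_adj hp hq hq' hpq hpq']

theorem exists_far_triangle (h : IsFarSystem H C) {y : α} {z : β} (hz : z ∈ C y) :
    ∃ p q, (farGraph H).Adj y p ∧ (farGraph H).Adj y q ∧ (farGraph H).Adj p q ∧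
      z ∈ C p ∧ z ∈ C q := by
  classical
  set N := (farGraph H).neighborFinset y with hN
  have card_N : #N = 4 := by rw [hN, card_neighborFinset_eq_degree, h.degree_farGraph]
  by_cases h3 : 3 ≤ #{w ∈ N | z ∈ C w}
  · obtain ⟨p, hp, q, hq, hpq⟩ := h.exists_farGraph_adj (filter_subset _ _) h3
    rw [mem_filter, mem_neighborFinset] at hp hq
    exact ⟨p, q, hp.1, hq.1, hpq, hp.2, hq.2⟩
  have adj_of_notMem : ∀ {p q}, (farGraph H).Adj y p → (farGraph H).Adj y q → p ≠ q →
      z ∉ C p → z ∉ C q → (farGraph H).Adj p q := fun hp hq hpq hzp hzq => by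
    by_contra hfar
    exact (mem_union.1 (h.subset_union hp hq hpq hfar hz)).elim hzp hzq
  have card_compl := card_filter_add_card_filter_not (s := N) (fun w => z ∈ C w)
  obtain ⟨q, hq⟩ := card_pos.1 (show 0 < #{w ∈ N | z ∉ C w} by omega)
  rw [mem_filter, mem_neighborFinset] at hq
  obtain ⟨r, hr, s, hs, hrs⟩ := h.exists_farGraph_adj (erase_subset q N) (by
    rw [card_erase_of_mem (by simpa [hN] using hq.1), card_N])
  rw [mem_erase, mem_neighborFinset] at hr hs
  have mem_of_adj : ∀ {r s}, (farGraph H).Adj y r → (farGraph H).Adj y s → (farGraph H).Adj r s →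
      r ≠ q → s ≠ q → z ∈ C r := fun hr hs hrs hrq hsq => by
    by_contra hzr
    have hqr := adj_of_notMem hq.1 hr hrq.symm hq.2 hzr
    exact hsq (h.eq_of_farGraph_adj hr hs hq.1 hrs hqr.symm)
  exact ⟨r, s, hr.2, hs.2, hrs, mem_of_adj hr.2 hs.2 hrs hr.1 hs.1,
    mem_of_adj hs.2 hr.2 hrs.symm hs.1 hr.1⟩

theorem eighteen_le_sum_of_card_eq_seven [DecidableEq α] (h : IsFarSystem H C) {z : β}
    (h7 : #{y | z ∈ C y} = 7) :
    18 ≤ ∑ y with z ∈ C y, #{p ∈ (farGraph H).neighborFinset y | z ∈ C p} := by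
  classical
  set K := ((farGraph H).induce {y | z ∈ C y}).spanningCoe with hK
  have adj_iff : ∀ y p, K.Adj y p ↔ (z ∈ C y ∧ z ∈ C p) ∧ (farGraph H).Adj y p := fun y p => by
    simp [hK, and_assoc, and_comm, and_left_comm]
  have seven_le : 7 ≤ 3 * #(K.cliqueFinset 3) := by
    rw [← h7, mul_comm, ← smul_eq_mul, ← sum_const]
    refine (card_le_card fun y hy => ?_).trans
      ((card_biUnion_le (s := K.cliqueFinset 3) (t := id)).trans_eq
        (sum_congr rfl fun t ht => ((mem_cliqueFinset_iff).1 ht).card_eq))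
    rw [mem_filter] at hy
    obtain ⟨p, q, hyp, hyq, hpq, hzp, hzq⟩ := h.exists_far_triangle hy.2
    refine mem_biUnion.2 ⟨{y, p, q}, mem_cliqueFinset_iff.2 (is3Clique_triple_iff.2 ?_), by simp⟩
    simp only [adj_iff]
    exact ⟨⟨⟨hy.2, hzp⟩, hyp⟩, ⟨⟨hy.2, hzq⟩, hyq⟩, ⟨hzp, hzq⟩, hpq⟩
  have three_mul_le : 3 * #(K.cliqueFinset 3) ≤ #K.edgeFinset :=
    (h.edgeDisjointTriangles_farGraph.mono
      (spanningCoe_induce_le (farGraph H) {y | z ∈ C y})).card_edgeFinset_le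
  have sum_degrees : ∑ y with z ∈ C y, #{p ∈ (farGraph H).neighborFinset y | z ∈ C p}
      = ∑ y, K.degree y := by
    rw [sum_filter]
    refine sum_congr rfl fun y _ => ?_
    rw [← card_neighborFinset_eq_degree]
    split_ifs with hy
    · exact congrArg card (by ext p; simp [adj_iff, hy, and_comm])
    · exact (card_eq_zero.2 (by ext p; simp [adj_iff, hy])).symm
  rw [sum_degrees, sum_degrees_eq_twice_card_edges]
  omega

theorem exists_card_ne_seven (h : IsFarSystem H C) :
    ∃ y, ∃ z ∈ C y, #{y' | z ∈ C y'} ≠ 7 := by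
  classical
  by_contra! h7
  have lower : 48 * 18 ≤
      ∑ z ∈ univ.biUnion C, ∑ y with z ∈ C y, #{p ∈ (farGraph H).neighborFinset y | z ∈ C p} := by
    rw [← h.card_biUnion_eq h7, ← smul_eq_mul]
    refine card_nsmul_le_sum _ _ _ fun z hz => ?_
    obtain ⟨y, -, hy⟩ := mem_biUnion.1 hz
    exact h.eighteen_le_sum_of_card_eq_seven (h7 y z hy)
  have sum_inter : ∀ y,
      ∑ z ∈ C y, #{p ∈ (farGraph H).neighborFinset y | z ∈ C p} = 40 := fun y => by
    have := sum_card_bipartiteAbove_eq_sum_card_bipartiteBelow (s := C y)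
      (t := (farGraph H).neighborFinset y) fun z p => z ∈ C p
    refine this.trans ((sum_const_nat (m := 10) fun p hp => ?_).trans ?_)
    · rw [bipartiteBelow, filter_mem_eq_inter]
      exact h.card_inter_of_far (by simpa using hp)
    · rw [card_neighborFinset_eq_degree, h.degree_farGraph]
  have upper : ∑ z ∈ univ.biUnion C,
      ∑ y with z ∈ C y, #{p ∈ (farGraph H).neighborFinset y | z ∈ C p} = 21 * 40 := by
    rw [sum_comm' (t' := univ) (s' := C) fun z y => by simpa using fun hz => ⟨y, hz⟩,
      sum_congr rfl fun y _ => sum_inter y, sum_const, card_univ, h.card_eq, smul_eq_mul]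
  omega

end IsFarSystem

end FarSystems

section CoolsaetArray

theorem mul_eq_of_le_add_one {R : Type*} [CommSemiring R] {u : ℕ → R} (h0 : u 0 = 1) (h2 : u 2 = 0)
    {p q : ℕ} (hp : p ≤ 3) (hq : q ≤ 3) (hpq : p ≤ q + 1) (hqp : q ≤ p + 1) (hne : p + q ≠ 0) :
    u p * u q = u 1 * ((if p = 0 then 1 else 0) + if q = 0 then 1 else 0)
      + u 1 ^ 2 * (if p = 1 ∧ q = 1 then 1 else 0) + u 3 ^ 2 * if p = 3 ∧ q = 3 then 1 else 0 := by
  interval_cases p <;> interval_cases q <;> first | omega | simp [h0, h2, sq]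

variable {V : Type*} [Fintype V] {G : SimpleGraph V} {b c a : ℕ → ℕ}

theorem sum_mul_mul_of_adj [DecidableRel G.Adj] {R : Type*} [CommSemiring R] {u : ℕ → R}
    (hG : G.Connected) (hdiam : ∀ x y, G.dist x y ≤ 3) (h0 : u 0 = 1) (h2 : u 2 = 0) {x y : V}
    (hxy : G.Adj x y) (f : V → R) :
    ∑ z, u (G.dist x z) * u (G.dist y z) * f z = u 1 * (f x + f y)
      + u 1 ^ 2 * ∑ z with G.Adj x z ∧ G.Adj y z, f z
      + u 3 ^ 2 * ∑ z with G.dist x z = 3 ∧ G.dist y z = 3, f z := by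
  classical
  have hterm : ∀ z, u (G.dist x z) * u (G.dist y z) * f z =
      u 1 * ((if x = z then f z else 0) + if y = z then f z else 0)
        + u 1 ^ 2 * (if G.Adj x z ∧ G.Adj y z then f z else 0)
        + u 3 ^ 2 * if G.dist x z = 3 ∧ G.dist y z = 3 then f z else 0 := fun z => by
    have hd := dist_eq_one_iff_adj.2 hxy
    have hxyz := hG.dist_triangle (u := x) (v := y) (w := z)
    have hyxz := hG.dist_triangle (u := y) (v := x) (w := z)
    have hxzy := hG.dist_triangle (u := x) (v := z) (w := y)
    rw [G.dist_comm (u := y) (v := x)] at hyxz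
    rw [G.dist_comm (u := z)] at hxzy
    rw [mul_eq_of_le_add_one h0 h2 (hdiam x z) (hdiam y z) (by omega) (by omega) (by omega)]
    simp only [hG.dist_eq_zero_iff, dist_eq_one_iff_adj, add_mul, mul_assoc, ite_mul, one_mul,
      zero_mul]
  simp only [hterm, sum_add_distrib, ← mul_sum, sum_ite_eq, mem_univ, if_true, sum_filter]

theorem card_far_inter_far [DecidableEq V] (x y w : V) :
    #(({z | G.dist x z = 3 ∧ G.dist y z = 3} : Finset V) ∩
        ({z | G.dist x z = 3 ∧ G.dist w z = 3} : Finset V))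
      = #{z | (G.dist x z = 3 ∧ G.dist y z = 3) ∧ G.dist w z = 3} := by
  rw [← filter_and]
  exact congrArg card (filter_congr fun z _ => by tauto)

/-- The intersection array `{21, 16, 8; 1, 4, 14}`. -/
structure IsCoolsaetArray (b c : ℕ → ℕ) : Prop where
  b_zero : b 0 = 21
  b_one : b 1 = 16
  b_two : b 2 = 8
  c_one : c 1 = 1
  c_two : c 2 = 4
  c_three : c 3 = 14

/-- The standard sequence of the eigenvalue `7` of a graph with intersection array
`{21, 16, 8; 1, 4, 14}`; junk beyond the diameter. -/
noncomputable def cosineSeven : ℕ → ℝ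
  | 1 => 1 / 3
  | 2 => 0
  | 3 => -1 / 6
  | _ => 1

/-- The standard sequence of the eigenvalue `-7` of a graph with intersection array
`{21, 16, 8; 1, 4, 14}`; junk beyond the diameter. -/
noncomputable def cosineNegSeven : ℕ → ℝ
  | 1 => -1 / 3
  | 2 => 1 / 6
  | 3 => -1 / 6
  | _ => 1

namespace IsCoolsaetArray

theorem sum_cosineNegSeven_far (h : IsDRG G 3 b c a) {x y w : V} (hxw : G.Adj x w) :
    ∑ z with G.dist x z = 3 ∧ G.dist y z = 3, cosineNegSeven (G.dist w z) =
      1 / 6 * #{z | G.dist x z = 3 ∧ G.dist y z = 3}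
      - 1 / 3 * #{z | (G.dist x z = 3 ∧ G.dist y z = 3) ∧ G.dist w z = 3} := by
  have hterm : ∀ z ∈ ({z | G.dist x z = 3 ∧ G.dist y z = 3} : Finset V),
      cosineNegSeven (G.dist w z) = 1 / 6 - 1 / 3 * if G.dist w z = 3 then 1 else 0 := by
    intro z hz
    have hle := h.connected.dist_triangle (u := x) (v := w) (w := z)
    rw [dist_eq_one_iff_adj.2 hxw, (mem_filter.1 hz).2.1] at hle
    have := h.le_diam w z
    obtain h2 | h3 : G.dist w z = 2 ∨ G.dist w z = 3 := by omega
    · norm_num [h2, cosineNegSeven]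
    · norm_num [h3, cosineNegSeven]
  rw [sum_congr rfl hterm, sum_sub_distrib, ← mul_sum, sum_const, sum_boole, filter_filter,
    nsmul_eq_mul, mul_comm]

theorem kreinSum_eq_zero (hA : IsCoolsaetArray b c) :
    kreinSum 3 b c cosineSeven cosineSeven cosineNegSeven = 0 := by
  norm_num [kreinSum, sum_range_succ, sphereCard, prod_range_succ, cosineSeven, cosineNegSeven,
    hA.b_zero, hA.b_one, hA.b_two, hA.c_one, hA.c_two, hA.c_three]

theorem a_eq (h : IsDRG G 3 b c a) (hA : IsCoolsaetArray b c) : a 1 = 4 ∧ a 2 = 9 ∧ a 3 = 7 := by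
  have h1 := h.sum_params (i := 1) (by norm_num)
  have h2 := h.sum_params (i := 2) (by norm_num)
  have h3 := h.sum_params (i := 3) le_rfl
  rw [hA.c_one, hA.b_one, hA.b_zero] at h1
  rw [hA.c_two, hA.b_two, hA.b_zero] at h2
  rw [hA.c_three, h.b_diam, hA.b_zero] at h3
  omega

theorem isCosineSeq (h : IsDRG G 3 b c a) (hA : IsCoolsaetArray b c) :
    IsCosineSeq 3 b c a 7 cosineSeven ∧ IsCosineSeq 3 b c a (-7) cosineNegSeven := by
  obtain ⟨a1, a2, a3⟩ := hA.a_eq h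
  refine ⟨⟨rfl, fun i hi => ?_⟩, rfl, fun i hi => ?_⟩
  all_goals
    interval_cases i <;>
      norm_num [cosineSeven, cosineNegSeven, hA.b_zero, hA.b_one, hA.b_two, hA.c_one, hA.c_two,
        hA.c_three, a1, a2, a3, h.a_zero, h.b_diam, h.c_zero]

theorem card_common [DecidableRel G.Adj] (h : IsDRG G 3 b c a) (hA : IsCoolsaetArray b c)
    {x y : V} (hxy : G.Adj x y) : #{z | G.Adj x z ∧ G.Adj y z} = 4 := by
  rw [← (hA.a_eq h).1, ← h.card_a 1 (by norm_num) x y (dist_eq_one_iff_adj.2 hxy),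
    Nat.card_eq_fintype_card, ← Set.toFinset_card]
  exact congrArg card (by ext z; simp [and_comm])

theorem sum_cosineNegSeven_common [DecidableRel G.Adj] (h : IsDRG G 3 b c a)
    (hA : IsCoolsaetArray b c) {x y w : V} (hxy : G.Adj x y) (hxw : G.Adj x w) :
    ∑ z with G.Adj x z ∧ G.Adj y z, cosineNegSeven (G.dist w z) = 2 / 3
      - 1 / 2 * #{z | (G.Adj x z ∧ G.Adj y z) ∧ G.Adj w z}
      + 5 / 6 * if G.Adj y w then 1 else 0 := by
  classical
  have hterm : ∀ z ∈ ({z | G.Adj x z ∧ G.Adj y z} : Finset V), cosineNegSeven (G.dist w z) =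
      1 / 6 - 1 / 2 * (if G.Adj w z then 1 else 0) + 5 / 6 * if w = z then 1 else 0 := by
    intro z hz
    have hle := h.connected.dist_triangle (u := w) (v := x) (w := z)
    rw [dist_eq_one_iff_adj.2 hxw.symm, dist_eq_one_iff_adj.2 (mem_filter.1 hz).2.1] at hle
    simp only [← dist_eq_one_iff_adj, ← h.connected.dist_eq_zero_iff]
    interval_cases G.dist w z <;> norm_num [cosineNegSeven]
  rw [sum_congr rfl hterm, sum_add_distrib, sum_sub_distrib, ← mul_sum, ← mul_sum, sum_const,
    hA.card_common h hxy, sum_boole, filter_filter, sum_ite_eq]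
  simp only [mem_filter, mem_univ, true_and, hxw]
  norm_num

theorem triple_count [DecidableRel G.Adj] (h : IsDRG G 3 b c a) (hA : IsCoolsaetArray b c)
    {x y w : V} (hxy : G.Adj x y) (hxw : G.Adj x w) :
    (#{z | (G.dist x z = 3 ∧ G.dist y z = 3) ∧ G.dist w z = 3} : ℝ)
      + 6 * #{z | (G.Adj x z ∧ G.Adj y z) ∧ G.Adj w z}
      = 1 / 2 * #{z | G.dist x z = 3 ∧ G.dist y z = 3} + 36 * cosineNegSeven (G.dist w y) - 4
        + 10 * if G.Adj y w then 1 else 0 := by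
  classical
  obtain ⟨hu, hv⟩ := hA.isCosineSeq h
  have hsum := h.sum_triple_eq_zero hu hu hv hA.kreinSum_eq_zero x y w
  rw [sum_mul_mul_of_adj h.connected h.le_diam rfl rfl hxy,
    hA.sum_cosineNegSeven_common h hxy hxw, sum_cosineNegSeven_far h hxw,
    dist_eq_one_iff_adj.2 hxw.symm] at hsum
  simp only [cosineSeven] at hsum
  rw [show cosineNegSeven 1 = -1 / 3 from rfl] at hsum
  linear_combination -108 * hsum

theorem card_far (h : IsDRG G 3 b c a) (hA : IsCoolsaetArray b c) {x y : V} (hxy : G.Adj x y) :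
    #{z | G.dist x z = 3 ∧ G.dist y z = 3} = 16 := by
  classical
  have key := hA.triple_count h hxy hxy
  simp only [and_assoc, and_self, hA.card_common h hxy, dist_self, G.irrefl, if_false] at key
  rw [show cosineNegSeven 0 = 1 from rfl] at key
  exact_mod_cast show (#{z | G.dist x z = 3 ∧ G.dist y z = 3} : ℝ) = 16 by
    push_cast at key
    linarith

theorem card_far_add_six_mul_card_common_of_adj [DecidableRel G.Adj] (h : IsDRG G 3 b c a)
    (hA : IsCoolsaetArray b c) {x y w : V} (hxy : G.Adj x y) (hxw : G.Adj x w) (hyw : G.Adj y w) :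
    #{z | (G.dist x z = 3 ∧ G.dist y z = 3) ∧ G.dist w z = 3}
      + 6 * #{z | (G.Adj x z ∧ G.Adj y z) ∧ G.Adj w z} = 2 := by
  have key := hA.triple_count h hxy hxw
  rw [hA.card_far h hxy, dist_eq_one_iff_adj.2 hyw.symm, if_pos hyw,
    show cosineNegSeven 1 = -1 / 3 from rfl] at key
  exact_mod_cast key.trans (show _ = (2 : ℝ) by norm_num)

theorem card_far_add_six_mul_card_common_of_not_adj [DecidableRel G.Adj] (h : IsDRG G 3 b c a)
    (hA : IsCoolsaetArray b c) {x y w : V} (hxy : G.Adj x y) (hxw : G.Adj x w)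
    (hne : y ≠ w) (hyw : ¬G.Adj y w) :
    #{z | (G.dist x z = 3 ∧ G.dist y z = 3) ∧ G.dist w z = 3}
      + 6 * #{z | (G.Adj x z ∧ G.Adj y z) ∧ G.Adj w z} = 10 := by
  have key := hA.triple_count h hxy hxw
  have dist_eq_two : G.dist w y = 2 := by
    have hle := h.connected.dist_triangle (u := w) (v := x) (w := y)
    rw [dist_eq_one_iff_adj.2 hxw.symm, dist_eq_one_iff_adj.2 hxy] at hle
    have hpos := h.connected.pos_dist_of_ne hne.symm
    have hne_one := mt dist_eq_one_iff_adj.1 fun hwy : G.Adj w y => hyw hwy.symm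
    omega
  rw [hA.card_far h hxy, dist_eq_two, if_neg hyw, show cosineNegSeven 2 = 1 / 6 from rfl] at key
  exact_mod_cast key.trans (show _ = (10 : ℝ) by norm_num)

theorem fiveLeGirth (h : IsDRG G 3 b c a) (hA : IsCoolsaetArray b c) (x : V) :
    FiveLeGirth (G.comap (Subtype.val : {y // G.Adj x y} → V)) where
  not_adj y w u hyu hwu hyw := by
    classical
    have hcard := hA.card_far_add_six_mul_card_common_of_adj h y.2 w.2 hyw
    have hpos : 0 < #{z | (G.Adj x z ∧ G.Adj y z) ∧ G.Adj w z} :=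
      card_pos.2 ⟨u, by simpa using ⟨⟨u.2, hyu⟩, hwu⟩⟩
    omega
  eq_of_common y w u u' hne hyu hwu hyu' hwu' := by
    classical
    have hle : #{z | (G.Adj x z ∧ G.Adj y z) ∧ G.Adj w z} ≤ 1 := by
      by_cases hyw : G.Adj y w
      · have := hA.card_far_add_six_mul_card_common_of_adj h y.2 w.2 hyw
        omega
      · have := hA.card_far_add_six_mul_card_common_of_not_adj h y.2 w.2
          (Subtype.coe_ne_coe.2 hne) hyw
        omega
    exact Subtype.ext (card_le_one.1 hle u (by simpa using ⟨⟨u.2, hyu⟩, hwu⟩) u'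
      (by simpa using ⟨⟨u'.2, hyu'⟩, hwu'⟩))

theorem isFarSystem [DecidableEq V] [DecidableRel G.Adj] (h : IsDRG G 3 b c a)
    (hA : IsCoolsaetArray b c) (x : V) :
    IsFarSystem (G.comap (Subtype.val : {y // G.Adj x y} → V))
      fun y => {z | G.dist x z = 3 ∧ G.dist y z = 3} where
  toFiveLeGirth := hA.fiveLeGirth h x
  card_eq := by
    rw [Fintype.card_subtype, ← neighborFinset_eq_filter, card_neighborFinset_eq_degree,
      h.degree_eq, hA.b_zero]
  regular y := by
    rw [← hA.card_common h y.2, ← card_neighborFinset_eq_degree,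
      ← card_map (Function.Embedding.subtype (G.Adj x))]
    exact congrArg card (by ext z; simp [and_comm])
  card_set y := hA.card_far h y.2
  card_inter_of_adj y w hyw := by
    have := hA.card_far_add_six_mul_card_common_of_adj h y.2 w.2 hyw
    rw [card_far_inter_far]
    omega
  card_inter_of_common y w u hne hyu hwu := by
    have hcard := hA.card_far_add_six_mul_card_common_of_not_adj h y.2 w.2
      (Subtype.coe_ne_coe.2 hne)
      ((hA.fiveLeGirth h x).not_adj hyu hwu)
    have hpos : 0 < #{z | (G.Adj x z ∧ G.Adj y z) ∧ G.Adj w z} :=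
      card_pos.2 ⟨u, by simpa using ⟨⟨u.2, hyu⟩, hwu⟩⟩
    rw [card_far_inter_far]
    omega
  card_inter_of_far y w hyw := by
    have hcard := hA.card_far_add_six_mul_card_common_of_not_adj h y.2 w.2
      (Subtype.coe_ne_coe.2 hyw.1) hyw.2.1
    have card_common_eq_zero : #{z | (G.Adj x z ∧ G.Adj y z) ∧ G.Adj w z} = 0 := by
      rw [card_eq_zero, filter_eq_empty_iff]
      exact fun z _ hz => hyw.2.2 ⟨z, hz.1.1⟩ hz.1.2 hz.2
    rw [card_far_inter_far]
    omega

theorem not_isDRG (hA : IsCoolsaetArray b c) : ¬IsDRG G 3 b c a := fun h => by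
  classical
  obtain ⟨x⟩ := h.connected.nonempty
  obtain ⟨y, z, hz, hne⟩ := (hA.isFarSystem h x).exists_card_ne_seven
  rw [mem_filter] at hz
  refine hne ?_
  rw [← (hA.a_eq h).2.2, ← h.card_a 3 le_rfl z x (by rw [G.dist_comm, hz.2.1]),
    ← card_map (Function.Embedding.subtype (G.Adj x)), Nat.card_eq_fintype_card,
    ← Set.toFinset_card]
  exact congrArg card (by ext w; simp [hz.2.1, G.dist_comm, and_comm])

end IsCoolsaetArray

end CoolsaetArray

section DiameterThree

variable {V : Type*} [Fintype V] {G : SimpleGraph V} {b c a : ℕ → ℕ} {θ η : ℝ}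

namespace IsDRG

theorem kdist_eq_sphereCard (h : IsDRG G 3 b c a) {i : ℕ} (hi : i ≤ 3) :
    kdist b c i = sphereCard b c i := by
  have := h.c_one three_pos
  interval_cases i
  · simp [kdist, sphereCard]
  · simp [kdist, sphereCard, this]
  all_goals
    simp only [kdist, sphereCard, prod_range_succ, prod_range_zero, this]
    ring

variable [DecidableEq V] [DecidableRel G.Adj]

theorem isCosineSeq_stdSeq (h : IsDRG G 3 b c a) (hθ : IsEig G θ) :
    IsCosineSeq 3 b c a θ (stdSeq b c a θ) := by
  refine h.isCosineSeq_of_isEig hθ three_pos rfl fun i hi => ?_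
  have h0 : (b 0 : ℝ) ≠ 0 := by exact_mod_cast (h.b_pos (i := 0) (by norm_num)).ne'
  have h1 : (b 1 : ℝ) ≠ 0 := by exact_mod_cast (h.b_pos (i := 1) (by norm_num)).ne'
  have h2 : (b 2 : ℝ) ≠ 0 := by exact_mod_cast (h.b_pos (i := 2) (by norm_num)).ne'
  interval_cases i <;> simp only [stdSeq, h.a_zero, h.c_zero] <;> field_simp <;> push_cast <;> ring

theorem kreinSum_eq_zero_of_krein11 (h : IsDRG G 3 b c a) (hθ : IsEig G θ)
    (hK : krein11 (Fintype.card V) (eigMult G θ) b c a θ η = 0) :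
    kreinSum 3 b c (stdSeq b c a θ) (stdSeq b c a θ) (stdSeq b c a η) = 0 := by
  have := h.connected.nonempty
  have hn : (Fintype.card V : ℝ) ≠ 0 := by exact_mod_cast Fintype.card_ne_zero
  have hm : (eigMult G θ : ℝ) ≠ 0 :=
    left_ne_zero_of_mul (h.eigMult_mul_cosineNorm (h.isCosineSeq_stdSeq hθ) ▸ hn)
  rw [← (mul_eq_zero.1 hK).resolve_left (div_ne_zero (mul_ne_zero hm hm) hn), kreinSum]
  refine sum_congr rfl fun i hi => ?_
  rw [h.kdist_eq_sphereCard (mem_range_succ_iff.1 hi)]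
  ring

end IsDRG

end DiameterThree

section ShillaArrays

/-- The intersection numbers of a Shilla distance-regular graph with `b(Γ) = β`, expressed through
`β`, `a 3`, `b 2` and `c 2`. -/
structure IsShillaArray (β : ℕ) (b c a : ℕ → ℕ) : Prop where
  one_lt : 1 < β
  le_a_three : β ≤ a 3
  a_zero : a 0 = 0
  a_one : (a 1 : ℝ) = a 3 - β
  a_two : (a 2 : ℝ) = β * a 3 - b 2 - c 2
  b_zero : (b 0 : ℝ) = β * a 3
  b_one : (b 1 : ℝ) = (β - 1) * (a 3 + 1)
  b_two_pos : 0 < b 2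
  b_three : b 3 = 0
  c_zero : c 0 = 0
  c_one : c 1 = 1
  c_two_pos : 0 < c 2
  c_three : (c 3 : ℝ) = (β - 1) * a 3

theorem IsShilla.b_zero_eq {V : Type*} [Fintype V] [DecidableEq V] {G : SimpleGraph V}
    [DecidableRel G.Adj] {b c a : ℕ → ℕ} (hG : IsShilla G b c a) :
    (b 0 : ℝ) = a 3 * (a 3 - a 1) := by
  have h := hG.drg
  have hu := h.isCosineSeq_stdSeq hG.second.1
  have hb0 : (b 0 : ℝ) ≠ 0 := by exact_mod_cast (h.b_pos (i := 0) (by norm_num)).ne'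
  have hb1 : (b 1 : ℝ) ≠ 0 := by exact_mod_cast (h.b_pos (i := 1) (by norm_num)).ne'
  have hc3 : (c 3 : ℝ) ≠ 0 := by exact_mod_cast (h.c_pos (i := 2) (by norm_num)).ne'
  have stdSeq_two_eq_zero : stdSeq b c a (a 3) 2 = 0 := by
    have hlast := hu.recurrence 3 le_rfl
    rw [h.b_diam, Nat.cast_zero, zero_mul, add_zero, add_eq_right] at hlast
    exact (mul_eq_zero.1 hlast).resolve_left hc3
  have hquot : ((a 3 : ℝ) - a 1) * (a 3 / b 0) - 1 = 0 := by
    simpa [stdSeq, hb1, h.c_one three_pos] using stdSeq_two_eq_zero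
  field_simp at hquot
  linarith

theorem IsShilla.isShillaArray {V : Type*} [Fintype V] [DecidableEq V] {G : SimpleGraph V}
    [DecidableRel G.Adj] {b c a : ℕ → ℕ} (hG : IsShilla G b c a) {β : ℕ} (hβ : a 3 = a 1 + β) :
    IsShillaArray β b c a := by
  have h := hG.drg
  have hc1 := h.c_one three_pos
  have hb3 := h.b_diam
  have hc3 := h.c_pos (i := 2) (by norm_num)
  have a_one : (a 1 : ℝ) = a 3 - β := by rw [hβ]; push_cast; ring
  have b_zero : (b 0 : ℝ) = β * a 3 := by rw [hG.b_zero_eq, a_one]; ring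
  have sum_params (i : ℕ) (hi : i ≤ 3) : (c i + a i + b i : ℝ) = b 0 := by
    exact_mod_cast h.sum_params hi
  have sum_one := sum_params 1 (by norm_num)
  have sum_two := sum_params 2 (by norm_num)
  have sum_three := sum_params 3 le_rfl
  rw [hc1, Nat.cast_one] at sum_one
  rw [hb3, Nat.cast_zero] at sum_three
  have c_three : (c 3 : ℝ) = (β - 1) * a 3 := by linarith
  refine ⟨?_, by omega, h.a_zero, a_one, by linarith, b_zero, by linarith,
    h.b_pos (by norm_num), hb3, h.c_zero, hc1, h.c_pos (by norm_num), c_three⟩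
  have : (0 : ℝ) < (β - 1) * a 3 := c_three ▸ Nat.cast_pos.2 hc3
  exact_mod_cast sub_pos.1 (pos_of_mul_pos_left this (Nat.cast_nonneg _))

namespace IsShillaArray

variable {β : ℕ} {b c a : ℕ → ℕ} {θ : ℝ} {u v : ℕ → ℝ}

theorem cast_ne_zero (hA : IsShillaArray β b c a) : (β : ℝ) ≠ 0 ∧ (β - 1 : ℝ) ≠ 0 ∧
    (a 3 : ℝ) ≠ 0 ∧ (a 3 + 1 : ℝ) ≠ 0 ∧ (b 2 : ℝ) ≠ 0 ∧ (c 2 : ℝ) ≠ 0 := by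
  have hβ : (1 : ℝ) < β := by exact_mod_cast hA.one_lt
  have ha : (β : ℝ) ≤ a 3 := by exact_mod_cast hA.le_a_three
  exact ⟨by linarith, by linarith, by linarith, by linarith,
    by exact_mod_cast hA.b_two_pos.ne', by exact_mod_cast hA.c_two_pos.ne'⟩

theorem sphereCard_one (hA : IsShillaArray β b c a) : sphereCard b c 1 = β * a 3 := by
  simp [sphereCard, hA.b_zero, hA.c_one]

theorem sphereCard_two (hA : IsShillaArray β b c a) :
    sphereCard b c 2 = β * (β - 1) * a 3 * (a 3 + 1) / c 2 := by
  simp only [sphereCard, prod_range_succ, prod_range_zero, hA.b_zero, hA.b_one, hA.c_one]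
  ring

theorem sphereCard_three (hA : IsShillaArray β b c a) :
    sphereCard b c 3 = β * (a 3 + 1) * b 2 / c 2 := by
  obtain ⟨-, hβ1, ha0, -⟩ := hA.cast_ne_zero
  rw [sphereCard, prod_range_succ, ← sphereCard, hA.sphereCard_two, hA.c_three]
  field_simp

theorem cosine_one (hA : IsShillaArray β b c a) (hu : IsCosineSeq 3 b c a θ u) :
    u 1 = θ / (β * a 3) := by
  obtain ⟨hβ0, -, ha0, -⟩ := hA.cast_ne_zero
  have hrec := hu.recurrence 0 (by norm_num)
  simp only [hA.a_zero, hA.c_zero, hA.b_zero, hu.zero, Nat.cast_zero, zero_add, mul_one] at hrec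
  rw [eq_div_iff (mul_ne_zero hβ0 ha0), mul_comm, hrec]

theorem cosine_two (hA : IsShillaArray β b c a) (hu : IsCosineSeq 3 b c a θ u) :
    u 2 = (θ - a 3) * (θ + β) / (β * (β - 1) * a 3 * (a 3 + 1)) := by
  obtain ⟨hβ0, hβ1, ha0, ha1, -⟩ := hA.cast_ne_zero
  have hrec := hu.recurrence 1 (by norm_num)
  simp only [hA.a_one, hA.b_one, hA.c_one, hA.cosine_one hu, Nat.sub_self, hu.zero,
    Nat.cast_one, mul_one, Nat.reduceAdd] at hrec
  field_simp at hrec ⊢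
  linear_combination hrec

theorem cosine_three (hA : IsShillaArray β b c a) (hu : IsCosineSeq 3 b c a θ u) (hθ : θ ≠ a 3) :
    u 3 = (θ + β) / (β * (a 3 + 1)) := by
  obtain ⟨hβ0, hβ1, ha0, ha1, -⟩ := hA.cast_ne_zero
  have hrec := hu.recurrence 3 le_rfl
  simp only [hA.b_three, hA.c_three, Nat.add_one_sub_one, hA.cosine_two hu, Nat.cast_zero,
    zero_mul, add_zero] at hrec
  rw [eq_div_iff (mul_ne_zero hβ0 ha1)]
  refine mul_left_cancel₀ (sub_ne_zero.2 hθ) ?_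
  field_simp at hrec
  linear_combination -hrec

theorem recurrence_two (hA : IsShillaArray β b c a) (hu : IsCosineSeq 3 b c a θ u) :
    c 2 * u 1 + (β * a 3 - b 2 - c 2) * u 2 + b 2 * u 3 = θ * u 2 := by
  simpa [hA.a_two] using hu.recurrence 2 (by norm_num)

theorem eigenvalue_quadratic (hA : IsShillaArray β b c a) (hu : IsCosineSeq 3 b c a θ u)
    (hθ : θ ≠ a 3) (hθk : θ ≠ b 0) :
    θ ^ 2 + (b 2 + c 2 + β - a 3) * θ + β * b 2 + c 2 - β * a 3 = 0 := by
  obtain ⟨hβ0, hβ1, ha0, ha1, -⟩ := hA.cast_ne_zero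
  have hrec := hA.recurrence_two hu
  rw [hA.cosine_one hu, hA.cosine_two hu, hA.cosine_three hu hθ] at hrec
  field_simp at hrec
  refine mul_left_cancel₀ (sub_ne_zero.2 hθk) ?_
  rw [hA.b_zero]
  linear_combination -hrec

theorem cosine_one_second (hA : IsShillaArray β b c a) (hu : IsCosineSeq 3 b c a (a 3) u) :
    u 1 = 1 / β := by
  obtain ⟨hβ0, -, ha0, -⟩ := hA.cast_ne_zero
  rw [hA.cosine_one hu]
  field_simp

theorem cosine_two_second (hA : IsShillaArray β b c a) (hu : IsCosineSeq 3 b c a (a 3) u) :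
    u 2 = 0 := by
  simp [hA.cosine_two hu]

theorem cosine_three_second (hA : IsShillaArray β b c a) (hu : IsCosineSeq 3 b c a (a 3) u) :
    u 3 = -c 2 / (β * b 2) := by
  obtain ⟨hβ0, -, -, -, hb, -⟩ := hA.cast_ne_zero
  have hrec := hA.recurrence_two hu
  rw [hA.cosine_one_second hu, hA.cosine_two_second hu] at hrec
  field_simp at hrec ⊢
  linear_combination hrec

theorem sum_range_sphereCard (hA : IsShillaArray β b c a) (f : ℕ → ℝ) :
    ∑ i ∈ range 4, sphereCard b c i * f i = f 0 + β * a 3 * f 1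
      + β * (β - 1) * a 3 * (a 3 + 1) / c 2 * f 2 + β * (a 3 + 1) * b 2 / c 2 * f 3 := by
  rw [sum_range_succ, sum_range_succ, sum_range_succ, sum_range_one, hA.sphereCard_one,
    hA.sphereCard_two, hA.sphereCard_three, sphereCard, prod_range_zero, one_mul]

theorem cosineNorm_eq (hA : IsShillaArray β b c a) (hu : IsCosineSeq 3 b c a θ u)
    (hθ : θ ≠ a 3) : cosineNorm 3 b c u = 1 + θ ^ 2 / (β * a 3)
      + (θ - a 3) ^ 2 * (θ + β) ^ 2 / (β * (β - 1) * a 3 * (a 3 + 1) * c 2)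
      + (θ + β) ^ 2 * b 2 / (β * (a 3 + 1) * c 2) := by
  obtain ⟨hβ0, hβ1, ha0, ha1, -, hc⟩ := hA.cast_ne_zero
  rw [cosineNorm, hA.sum_range_sphereCard, hu.zero, hA.cosine_one hu, hA.cosine_two hu,
    hA.cosine_three hu hθ]
  field_simp

theorem cosineNorm_second (hA : IsShillaArray β b c a) (hu : IsCosineSeq 3 b c a (a 3) u) :
    cosineNorm 3 b c u = 1 + a 3 / β + (a 3 + 1) * c 2 / (β * b 2) := by
  obtain ⟨hβ0, -, -, -, hb, hc⟩ := hA.cast_ne_zero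
  rw [cosineNorm, hA.sum_range_sphereCard, hu.zero, hA.cosine_one_second hu,
    hA.cosine_two_second hu, hA.cosine_three_second hu]
  field_simp
  ring

theorem kreinSum_second_self (hA : IsShillaArray β b c a) (hu : IsCosineSeq 3 b c a (a 3) u) :
    kreinSum 3 b c u u u = ((a 3 + β ^ 2) * b 2 ^ 2 - (a 3 + 1) * c 2 ^ 2) / (β * b 2) ^ 2 := by
  obtain ⟨hβ0, -, -, -, hb, hc⟩ := hA.cast_ne_zero
  rw [kreinSum, hA.sum_range_sphereCard, hu.zero, hA.cosine_one_second hu,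
    hA.cosine_two_second hu, hA.cosine_three_second hu]
  field_simp
  ring

theorem kreinSum_second (hA : IsShillaArray β b c a) (hu : IsCosineSeq 3 b c a (a 3) u)
    (hv : IsCosineSeq 3 b c a θ v) (hθ : θ ≠ a 3) :
    kreinSum 3 b c u u v = ((β ^ 2 + θ) * b 2 + (β + θ) * c 2) / (β ^ 2 * b 2) := by
  obtain ⟨hβ0, -, ha0, ha1, hb, hc⟩ := hA.cast_ne_zero
  rw [kreinSum, hA.sum_range_sphereCard, hu.zero, hA.cosine_one_second hu,
    hA.cosine_two_second hu, hA.cosine_three_second hu, hv.zero, hA.cosine_one hv,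
    hA.cosine_three hv hθ]
  field_simp
  ring

end IsShillaArray

namespace IsShilla

variable {V : Type*} [Fintype V] [DecidableEq V] {G : SimpleGraph V} [DecidableRel G.Adj]
  {β : ℕ} {b c a : ℕ → ℕ} {θ : ℝ}

theorem card_eq (hG : IsShilla G b c a) (hA : IsShillaArray β b c a) :
    (Fintype.card V : ℝ) = 1 + β * a 3 + β * (β - 1) * a 3 * (a 3 + 1) / c 2
      + β * (a 3 + 1) * b 2 / c 2 := by
  obtain ⟨x⟩ := hG.drg.connected.nonempty
  have card_eq_sum := hG.drg.sum_dist (fun _ => 1) x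
  rw [hA.sum_range_sphereCard] at card_eq_sum
  simpa using card_eq_sum

theorem exists_mul_c_two (hG : IsShilla G b c a) (hA : IsShillaArray β b c a) :
    ∃ q : ℕ, (q * c 2 : ℝ) = β * (β - 1) * a 3 * (a 3 + 1) := by
  obtain ⟨-, -, -, -, -, hc⟩ := hA.cast_ne_zero
  obtain ⟨x⟩ := hG.drg.connected.nonempty
  have card_sphere_two := hG.drg.sum_dist (fun i => if i = 2 then 1 else 0) x
  refine ⟨#{y | G.dist x y = 2}, ?_⟩
  rw [← eq_div_iff hc, ← hA.sphereCard_two, natCast_card_filter, card_sphere_two]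
  simp

theorem krein_bound (hG : IsShilla G b c a) (hA : IsShillaArray β b c a) :
    (a 3 + 1) * c 2 ^ 2 ≤ (a 3 + β ^ 2) * b 2 ^ 2 := by
  obtain ⟨hβ0, -, -, -, hb, -⟩ := hA.cast_ne_zero
  have hu := hG.drg.isCosineSeq_stdSeq hG.second.1
  have hK := hG.drg.kreinSum_nonneg hu hu hu
  rw [hA.kreinSum_second_self hu, le_div_iff₀ (by positivity), zero_mul, sub_nonneg] at hK
  exact_mod_cast hK

theorem krein_relation (hG : IsShilla G b c a) (hA : IsShillaArray β b c a) (hθ : IsEig G θ)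
    (hne : θ ≠ a 3) (hK : krein11 (Fintype.card V) (eigMult G (a 3)) b c a (a 3) θ = 0) :
    (β ^ 2 + θ) * b 2 + (β + θ) * c 2 = 0 := by
  obtain ⟨hβ0, -, -, -, hb, -⟩ := hA.cast_ne_zero
  have h := hG.drg
  have hK := h.kreinSum_eq_zero_of_krein11 hG.second.1 hK
  rw [hA.kreinSum_second (h.isCosineSeq_stdSeq hG.second.1) (h.isCosineSeq_stdSeq hθ) hne] at hK
  exact (div_eq_zero_iff.1 hK).resolve_right (mul_ne_zero (pow_ne_zero 2 hβ0) hb)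

theorem eigMult_second (hG : IsShilla G b c a) (hA : IsShillaArray β b c a) :
    (eigMult G (a 3) * (1 + a 3 / β + (a 3 + 1) * c 2 / (β * b 2)) : ℝ) = 1 + β * a 3
      + β * (β - 1) * a 3 * (a 3 + 1) / c 2 + β * (a 3 + 1) * b 2 / c 2 := by
  have hu := hG.drg.isCosineSeq_stdSeq hG.second.1
  rw [← hG.card_eq hA, ← hA.cosineNorm_second hu, hG.drg.eigMult_mul_cosineNorm hu]

theorem eigMult_eq (hG : IsShilla G b c a) (hA : IsShillaArray β b c a) (hθ : IsEig G θ)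
    (hne : θ ≠ a 3) :
    eigMult G θ * (1 + θ ^ 2 / (β * a 3)
      + (θ - a 3) ^ 2 * (θ + β) ^ 2 / (β * (β - 1) * a 3 * (a 3 + 1) * c 2)
      + (θ + β) ^ 2 * b 2 / (β * (a 3 + 1) * c 2)) = 1 + β * a 3
      + β * (β - 1) * a 3 * (a 3 + 1) / c 2 + β * (a 3 + 1) * b 2 / c 2 := by
  have hu := hG.drg.isCosineSeq_stdSeq hθ
  rw [← hG.card_eq hA, ← hA.cosineNorm_eq hu hne, hG.drg.eigMult_mul_cosineNorm hu]

end IsShilla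

end ShillaArrays

section Integrality

variable {V : Type*} [Fintype V] [DecidableEq V] {G : SimpleGraph V} [DecidableRel G.Adj]
  {β : ℕ} {b c a : ℕ → ℕ} {θ : ℝ}

theorem IsEig.isIntegral (hθ : IsEig G θ) : IsIntegral ℤ θ := by
  obtain ⟨v, hv0, hv⟩ := hθ
  have hroot : (G.adjMatrix ℝ).charpoly.IsRoot θ :=
    Matrix.mem_spectrum_iff_isRoot_charpoly.1 <| Matrix.spectrum_toLin' (G.adjMatrix ℝ) ▸
      (Module.End.hasEigenvalue_of_hasEigenvector
        ⟨Module.End.mem_eigenspace_iff.2 hv, hv0⟩).mem_spectrum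
  have map_adjMatrix : (G.adjMatrix ℤ).map (Int.castRingHom ℝ) = G.adjMatrix ℝ := by
    ext x y
    simp [adjMatrix_apply, apply_ite]
  rw [← map_adjMatrix, Matrix.charpoly_map] at hroot
  refine ⟨(G.adjMatrix ℤ).charpoly, Matrix.charpoly_monic _, ?_⟩
  rwa [Polynomial.IsRoot, Polynomial.eval_map] at hroot

theorem IsEig.exists_int_eq (hθ : IsEig G θ) {p q : ℤ} (hq : q ≠ 0) (hpq : θ * q = p) :
    ∃ z : ℤ, θ = z := by
  have hθ_eq : θ = algebraMap ℚ ℝ (p / q) := by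
    rw [eq_div_of_mul_eq (by exact_mod_cast hq) hpq]
    simp
  have hint := hθ.isIntegral
  rw [hθ_eq, isIntegral_algebraMap_iff (algebraMap ℚ ℝ).injective] at hint
  obtain ⟨z, hz⟩ := IsIntegrallyClosed.isIntegral_iff.1 hint
  exact ⟨z, by rw [hθ_eq, ← hz]; simp⟩

theorem IsShilla.exists_nat_of_krein11_eq_zero (hG : IsShilla G b c a) (hA : IsShillaArray β b c a)
    (hθ : IsEig G θ) (hθa : θ < a 3)
    (hK : krein11 (Fintype.card V) (eigMult G (a 3)) b c a (a 3) θ = 0) :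
    ∃ r : ℕ, θ = -(β + r) ∧ (r * (b 2 + c 2) : ℝ) = β * (β - 1) * b 2 ∧
      (r ^ 2 + (a 3 + β) * r : ℝ) = (β - 1) * (β * b 2 + c 2) := by
  have hrel := hG.krein_relation hA hθ hθa.ne hK
  have hquad := hA.eigenvalue_quadratic (hG.drg.isCosineSeq_stdSeq hθ) hθa.ne
    (hθa.trans hG.second.2.1).ne
  have hβ : (1 : ℝ) < β := by exact_mod_cast hA.one_lt
  have hb : (0 : ℝ) < b 2 := by exact_mod_cast hA.b_two_pos
  have hc : (0 : ℝ) < c 2 := by exact_mod_cast hA.c_two_pos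
  obtain ⟨z, rfl⟩ := hθ.exists_int_eq (p := -(β ^ 2 * b 2 + β * c 2)) (q := b 2 + c 2)
    (by have := hA.b_two_pos; omega) (by push_cast; linear_combination hrel)
  have hpos : (0 : ℝ) < -β - z := by
    refine pos_of_mul_pos_left (b := (b 2 + c 2 : ℝ)) ?_ (by positivity)
    have : (0 : ℝ) < β * (β - 1) * b 2 := by
      have := sub_pos.2 hβ
      positivity
    linear_combination this + hrel
  obtain ⟨r, hr⟩ := Int.eq_ofNat_of_zero_le (a := -β - z) (by exact_mod_cast hpos.le)
  obtain rfl : z = -(β + r) := by omega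
  push_cast at hrel hquad ⊢
  exact ⟨r, rfl, by linear_combination -hrel, by linear_combination hquad - hrel⟩

end Integrality

section ThreeShilla

variable {V : Type*} [Fintype V] [DecidableEq V] {G : SimpleGraph V} [DecidableRel G.Adj]
  {b c a : ℕ → ℕ} {r s : ℕ}

theorem IsShillaArray.array_eq (hA : IsShillaArray 3 b c a) :
    b 0 = 3 * a 3 ∧ b 1 = 2 * (a 3 + 1) ∧ c 3 = 2 * a 3 := by
  have two_eq : ((3 : ℕ) - 1 : ℝ) = 2 := by norm_num
  have hb1 := hA.b_one
  have hc3 := hA.c_three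
  rw [two_eq] at hb1 hc3
  exact ⟨by exact_mod_cast hA.b_zero, by exact_mod_cast hb1, by exact_mod_cast hc3⟩

theorem IsShillaArray.exists_eq_mul (hA : IsShillaArray 3 b c a)
    (hbound : (a 3 + 1) * c 2 ^ 2 ≤ (a 3 + 3 ^ 2) * b 2 ^ 2) (hr : r * (b 2 + c 2) = 6 * b 2)
    (hquad : r ^ 2 + (a 3 + 3) * r = 6 * b 2 + 2 * c 2) :
    ∃ s, (r = 3 ∧ a 3 + 6 = 8 * s ∧ b 2 = 3 * s ∧ c 2 = 3 * s) ∨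
      (r = 4 ∧ a 3 + 7 = 7 * s ∧ b 2 = 4 * s ∧ c 2 = 2 * s) ∨
      (r = 5 ∧ a 3 + 8 = 32 * s ∧ b 2 = 25 * s ∧ c 2 = 5 * s) := by
  have ha := hA.le_a_three
  have hb := hA.b_two_pos
  have hc := hA.c_two_pos
  have c_lt : c 2 < 2 * b 2 := by
    by_contra! h
    nlinarith [Nat.pow_le_pow_left h 2, pow_pos hb 2]
  have three_le : 3 ≤ r := by
    by_contra! h
    interval_cases r <;> omega
  have le_five : r ≤ 5 := by
    by_contra! h
    nlinarith
  interval_cases r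
  · exact ⟨b 2 / 3, by omega⟩
  · exact ⟨b 2 / 4, by omega⟩
  · exact ⟨b 2 / 25, by omega⟩

namespace IsShilla

theorem false_of_b_two_eq_three_mul (hG : IsShilla G b c a) (hA : IsShillaArray 3 b c a)
    (ha : a 3 + 6 = 8 * s) (hb : b 2 = 3 * s) (hc : c 2 = 3 * s) : False := by
  have hs : (1 : ℝ) ≤ s := by exact_mod_cast (by omega : 1 ≤ s)
  have ha' : (a 3 : ℝ) = 8 * s - 6 := by rw [eq_sub_iff_add_eq]; exact_mod_cast ha
  have hm := hG.eigMult_second hA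
  generalize eigMult G (a 3) = m at hm
  rw [ha', hb, hc] at hm
  push_cast at hm
  have two_mul_eq : (2 * (s * m) + 45 : ℝ) = 66 * s := by
    refine mul_left_cancel₀ (by linarith : (2 * s - 1 : ℝ) ≠ 0) ?_
    field_simp at hm
    linear_combination hm / 4
  have : 2 * (s * m) + 45 = 66 * s := by exact_mod_cast two_mul_eq
  omega

theorem false_of_b_two_eq_twenty_five_mul (hG : IsShilla G b c a) (hA : IsShillaArray 3 b c a)
    (ha : a 3 + 8 = 32 * s) (hb : b 2 = 25 * s) (hc : c 2 = 5 * s) : False := by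
  have hs : (1 : ℝ) ≤ s := by exact_mod_cast (by omega : 1 ≤ s)
  have ha' : (a 3 : ℝ) = 32 * s - 8 := by rw [eq_sub_iff_add_eq]; exact_mod_cast ha
  have hm := hG.eigMult_second hA
  generalize eigMult G (a 3) = m at hm
  rw [ha', hb, hc] at hm
  push_cast at hm
  have two_mul_eq : (2 * (s * m) + 63 : ℝ) = 282 * s := by
    refine mul_left_cancel₀ (by linarith : (6 * s - 1 : ℝ) ≠ 0) ?_
    field_simp at hm
    linear_combination hm / 400
  have : 2 * (s * m) + 63 = 282 * s := by exact_mod_cast two_mul_eq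
  omega

theorem dvd_eighteen (hG : IsShilla G b c a) (hA : IsShillaArray 3 b c a)
    (ha : a 3 + 7 = 7 * s) (hb : b 2 = 4 * s) (hc : c 2 = 2 * s) : s ∣ 18 := by
  have hs : (1 : ℝ) ≤ s := by exact_mod_cast (by omega : 1 ≤ s)
  have ha' : (a 3 : ℝ) = 7 * s - 7 := by rw [eq_sub_iff_add_eq]; exact_mod_cast ha
  have dvd_fifty_four : (s : ℤ) ∣ 54 := by
    have hm := hG.eigMult_second hA
    generalize eigMult G (a 3) = m at hm
    rw [ha', hb, hc] at hm
    push_cast at hm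
    refine ⟨60 - m, ?_⟩
    have : (54 : ℝ) = s * (60 - m) := by
      refine mul_left_cancel₀ (by linarith : (3 * s - 2 : ℝ) ≠ 0) ?_
      field_simp at hm
      linear_combination hm / 28
    exact_mod_cast this
  have dvd_hundred_twenty_six : (s : ℤ) ∣ 126 := by
    obtain ⟨q, hq⟩ := hG.exists_mul_c_two hA
    rw [ha', hc] at hq
    push_cast at hq
    refine ⟨q - 147 * s + 273, ?_⟩
    have : (126 : ℝ) = s * (q - 147 * s + 273) := by linear_combination -hq / 2
    exact_mod_cast this
  exact_mod_cast (by norm_num : (18 : ℤ) = 126 - 2 * 54) ▸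
    dvd_sub dvd_hundred_twenty_six (dvd_fifty_four.mul_left 2)

theorem eigMult_neg_seven (hG : IsShilla G b c a) (hA : IsShillaArray 3 b c a)
    (hθ : IsEig G (-7)) (ha : a 3 + 7 = 7 * s) (hb : b 2 = 4 * s) (hc : c 2 = 2 * s) :
    (eigMult G (-7) * (s * (s + 4)) : ℤ) = 3 * (10 * s - 9) * (s - 1) * (7 * s - 6) := by
  have hs : (2 : ℝ) ≤ s := by exact_mod_cast (by have := hA.le_a_three; omega : 2 ≤ s)
  have ha' : (a 3 : ℝ) = 7 * (s - 1) := by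
    have : (a 3 + 7 : ℝ) = 7 * s := by exact_mod_cast ha
    linarith
  have hs1 : (s - 1 : ℝ) ≠ 0 := by linarith
  have ha1 : (7 * (s - 1) + 1 : ℝ) ≠ 0 := by linarith
  have hm := hG.eigMult_eq hA hθ (by linarith)
  generalize eigMult G (-7) = m at hm ⊢
  rw [ha', hb, hc] at hm
  push_cast at hm
  field_simp at hm
  have : (m * (s * (s + 4)) : ℝ) = 3 * (10 * s - 9) * (s - 1) * (7 * s - 6) := by
    refine mul_left_cancel₀ (by linarith : (3 * s - 2 : ℝ) ≠ 0) ?_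
    linear_combination hm / 28
  exact_mod_cast this

theorem eq_three_or_eq_six (hG : IsShilla G b c a) (hA : IsShillaArray 3 b c a) (hθ : IsEig G (-7))
    (ha : a 3 + 7 = 7 * s) (hb : b 2 = 4 * s) (hc : c 2 = 2 * s) : s = 3 ∨ s = 6 := by
  have hdvd : s ∈ Nat.divisors 18 :=
    Nat.mem_divisors.2 ⟨hG.dvd_eighteen hA ha hb hc, by norm_num⟩
  rw [show Nat.divisors 18 = {1, 2, 3, 6, 9, 18} from rfl] at hdvd
  simp only [mem_insert, mem_singleton] at hdvd
  have hm := hG.eigMult_neg_seven hA hθ ha hb hc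
  rcases hdvd with rfl | rfl | rfl | rfl | rfl | rfl
  · have := hA.le_a_three
    omega
  · obtain ⟨hb0, hb1, hc3⟩ := hA.array_eq
    exact absurd hG.drg <| IsCoolsaetArray.not_isDRG
      ⟨by omega, by omega, hb, hA.c_one, hc, by omega⟩
  · exact .inl rfl
  · exact .inr rfl
  · omega
  · omega

theorem intersectionArray_of_krein11_eq_zero (hG : IsShilla G b c a) (hβ : a 3 = a 1 + 3)
    {θ : ℝ} (hθ : IsEig G θ) (hθa : θ < a 3)
    (hK : krein11 (Fintype.card V) (eigMult G (a 3)) b c a (a 3) θ = 0) :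
    (b 0 = 42 ∧ b 1 = 30 ∧ b 2 = 12 ∧ c 1 = 1 ∧ c 2 = 6 ∧ c 3 = 28) ∨
    (b 0 = 105 ∧ b 1 = 72 ∧ b 2 = 24 ∧ c 1 = 1 ∧ c 2 = 12 ∧ c 3 = 70) := by
  have hA := hG.isShillaArray hβ
  obtain ⟨r, rfl, hr, hquad⟩ := hG.exists_nat_of_krein11_eq_zero hA hθ hθa hK
  simp only [Nat.cast_ofNat] at hθ hr hquad
  have hr_nat : r * (b 2 + c 2) = 6 * b 2 := by
    rify
    linear_combination hr
  have hquad_nat : r ^ 2 + (a 3 + 3) * r = 6 * b 2 + 2 * c 2 := by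
    rify
    linear_combination hquad
  obtain ⟨s, ⟨-, ha, hb, hc⟩ | ⟨rfl, ha, hb, hc⟩ | ⟨-, ha, hb, hc⟩⟩ :=
    hA.exists_eq_mul (hG.krein_bound hA) hr_nat hquad_nat
  · exact (hG.false_of_b_two_eq_three_mul hA ha hb hc).elim
  · have hθ : IsEig G (-7) := by
      convert hθ using 1
      norm_num
    have hc1 := hA.c_one
    obtain ⟨hb0, hb1, hc3⟩ := hA.array_eq
    rcases hG.eq_three_or_eq_six hA hθ ha hb hc with rfl | rfl <;> omega
  · exact (hG.false_of_b_two_eq_twenty_five_mul hA ha hb hc).elim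

end IsShilla

end ThreeShilla

/-- A Shilla distance-regular graph with `b(Γ) = 3` that is `Q`-polynomial with respect
to `θ₁` has intersection array `{42, 30, 12; 1, 6, 28}` or `{105, 72, 24; 1, 12, 70}`. -/
theorem stmt17 {V : Type*} [Fintype V] [DecidableEq V] (G : SimpleGraph V)
    [DecidableRel G.Adj] (b c a : ℕ → ℕ) (hG : IsShilla G b c a)
    (hβ : a 3 = a 1 + 3)
    (θ2 θ3 : ℝ) (h2 : IsEig G θ2) (h3 : IsEig G θ3)
    (h32 : θ3 < θ2) (h2a : θ2 < (a 3 : ℝ))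
    (hall : ∀ θ : ℝ, IsEig G θ → θ = (b 0 : ℝ) ∨ θ = (a 3 : ℝ) ∨ θ = θ2 ∨ θ = θ3)
    (n : ℕ) (hn : Fintype.card V = n) (m1 : ℕ) (hm1 : eigMult G ((a 3 : ℝ)) = m1)
    (hQ : IsQPolyTheta1 n m1 b c a ((a 3 : ℝ)) θ2 θ3) :
    (b 0 = 42 ∧ b 1 = 30 ∧ b 2 = 12 ∧ c 1 = 1 ∧ c 2 = 6 ∧ c 3 = 28) ∨
    (b 0 = 105 ∧ b 1 = 72 ∧ b 2 = 24 ∧ c 1 = 1 ∧ c 2 = 12 ∧ c 3 = 70) := by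
  subst hn hm1
  rcases hQ with hQ | hQ
  · exact hG.intersectionArray_of_krein11_eq_zero hβ h2 h2a hQ
  · exact hG.intersectionArray_of_krein11_eq_zero hβ h3 (h32.trans h2a) hQ
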